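/- arXiv:math/0009161 — 5 statements merged into one kernel-verified Lean document; each statement's English description precedes it below -/
import Mathlib

section
/- Let p > 0 be real, let α_1, …, α_N be distinct complex numbers with Re α_j ≤ p − 1, let p_1, …, p_N and p'_1, …, p'_N be polynomials with complex coefficients, and let f_1, g_1 ∈ L¹_loc([0,∞)). If Σ_{j=1}^N x^{α_j} p_j(ln x) + x^p f_1(x) = Σ_{j=1}^N x^{α_j} p'_j(ln x) + x^p g_1(x) for almost every x ∈ (0,1], then p_j = p'_j for every j (and hence f_1 = g_1 almost everywhere on (0,1]). In particular, the exponents and coefficient polynomials in the expansion at 0 of a function of the class L_{p,q} are uniquely determined by the function. -/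
open MeasureTheory Set Polynomial

open scoped Topology

/-! The functions `∑ x ^ βᵢ * Rᵢ (log x)` are stable under dilations `x ↦ eᵃ x`, which act on the
coefficients by `Rᵢ(X) ↦ exp (a βᵢ) Rᵢ(X + a)`. For `a ≤ 0` this action preserves the space of
coefficients whose sum is integrable near `0`, as well as every bound on the degrees. If that space
were nonzero it would therefore contain an eigenvector of the action. For small `a < 0` the numbers
`exp (a βᵢ)` are distinct, and then every eigenvector is a single power `c * x ^ βᵢ` with `c ≠ 0`,
which is not integrable near `0` when `Re βᵢ ≤ -1`. Dividing the difference of two expansions by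
`x ^ p` reduces uniqueness to this case. -/

theorem exists_hasEigenvector_mem {K V : Type*} [Field K] [IsAlgClosed K] [AddCommGroup V]
    [Module K V] {f : Module.End K V} {S : Submodule K V} [FiniteDimensional K S] (hS : S ≠ ⊥)
    (hf : ∀ v ∈ S, f v ∈ S) : ∃ μ, ∃ v ∈ S, f.HasEigenvector μ v := by
  have : Nontrivial S := Submodule.nontrivial_iff_ne_bot.2 hS
  obtain ⟨μ, hμ⟩ := Module.End.exists_eigenvalue (f.restrict hf)
  obtain ⟨v, hv⟩ := hμ.exists_hasEigenvector
  refine ⟨μ, v, v.2, Module.End.mem_eigenspace_iff.2 ?_, by simpa using hv.2⟩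
  exact congrArg Subtype.val hv.apply_eq_smul

section Taylor

variable {A : Type*} [CommRing A] [IsDomain A] {a : A} {P : A[X]}

theorem eq_of_smul_taylor_eq_smul {c μ : A} (hP : P ≠ 0) (h : c • taylor a P = μ • P) :
    c = μ := by
  have hlead := congrArg (coeff · P.natDegree) h
  simp only [coeff_smul, coeff_taylor_natDegree, coeff_natDegree, smul_eq_mul] at hlead
  exact mul_right_cancel₀ (leadingCoeff_ne_zero.2 hP) hlead

theorem eq_C_of_taylor_eq_self [CharZero A] (ha : a ≠ 0) (h : taylor a P = P) :
    P = C (P.eval 0) := by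
  have hper : Function.Periodic (fun x => P.eval x) a := fun x =>
    (taylor_eval a P x).symm.trans (by rw [h])
  have hinj : Function.Injective fun n : ℕ => (n : A) * a :=
    (mul_left_injective₀ ha).comp Nat.cast_injective
  refine eq_of_infinite_eval_eq P _ ((infinite_range_of_injective hinj).mono ?_)
  rintro _ ⟨n, rfl⟩
  simpa using hper.nat_mul_eq n

end Taylor

theorem eventually_injective_exp_mul {ι : Type*} [Finite ι] {β : ι → ℂ}
    (hβ : Function.Injective β) :
    ∀ᶠ a : ℝ in 𝓝[≠] 0, Function.Injective fun i => Complex.exp (a * β i) := by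
  have him : ∀ᶠ a : ℝ in 𝓝 0, ∀ i, |a * (β i).im| < Real.pi := by
    refine Filter.eventually_all.2 fun i => ?_
    have hcont : ContinuousAt (fun a : ℝ => |a * (β i).im|) 0 := by fun_prop
    exact hcont.eventually_lt_const (by simpa using Real.pi_pos)
  filter_upwards [nhdsWithin_le_nhds him, self_mem_nhdsWithin] with a ha ha0 i j hij
  have hbound (k : ι) : -Real.pi < (a * β k).im ∧ (a * β k).im < Real.pi := by
    rw [Complex.im_ofReal_mul]
    exact abs_lt.1 (ha k)
  have harg : a * β i = a * β j := Complex.exp_inj_of_neg_pi_lt_of_le_pi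
    (hbound i).1 (hbound i).2.le (hbound j).1 (hbound j).2.le hij
  exact hβ (mul_left_cancel₀ (Complex.ofReal_ne_zero.2 ha0) harg)

theorem exists_mem_pi_degreeLT {ι A : Type*} [Finite ι] [Semiring A] (R : ι → A[X]) :
    ∃ n, R ∈ Submodule.pi univ fun _ => degreeLT A n := by
  obtain ⟨n, hn⟩ := span_of_finite_le_degreeLT (finite_range R)
  exact ⟨n, fun i _ => hn (Submodule.subset_span (mem_range_self i))⟩

theorem fg_pi_degreeLT (ι A : Type*) [Finite ι] [Semiring A] (n : ℕ) :
    (Submodule.pi univ fun _ : ι => degreeLT A n).FG :=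
  Submodule.fg_pi fun _ => Module.Finite.iff_fg.1 inferInstance

theorem integrableOn_Ioc_of_locallyIntegrableOn_Ici {E : Type*} [NormedAddCommGroup E] {f : ℝ → E}
    {μ : Measure ℝ} {a b : ℝ} (hf : LocallyIntegrableOn f (Ici a) μ) : IntegrableOn f (Ioc a b) μ :=
  (hf.integrableOn_compact_subset Icc_subset_Ici_self isCompact_Icc).mono_set Ioc_subset_Icc_self

theorem ofReal_exp_mul_cpow (a : ℝ) {x : ℝ} (hx : 0 ≤ x) (s : ℂ) :
    ((Real.exp a * x : ℝ) : ℂ) ^ s = Complex.exp (a * s) * (x : ℂ) ^ s := by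
  rw [Complex.ofReal_mul, Complex.mul_cpow_ofReal_nonneg (Real.exp_pos a).le hx,
    Complex.cpow_def_of_ne_zero (Complex.ofReal_ne_zero.2 (Real.exp_ne_zero a)),
    ← Complex.ofReal_log (Real.exp_pos a).le, Real.log_exp]

section LogPowerSum

variable {ι : Type*}

/-- The action of the dilation `x ↦ eᵃ x` on the coefficients of `∑ x ^ βᵢ * Rᵢ (log x)`;
see `logPowerSum_exp_mul`. -/
noncomputable def dilation (β : ι → ℂ) (a : ℂ) : Module.End ℂ (ι → ℂ[X]) :=
  LinearMap.pi fun i => Complex.exp (a * β i) • taylor a ∘ₗ LinearMap.proj i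

theorem dilation_apply (β : ι → ℂ) (a : ℂ) (R : ι → ℂ[X]) (i : ι) :
    dilation β a R i = Complex.exp (a * β i) • taylor a (R i) := rfl

theorem dilation_mem_pi_degreeLT (β : ι → ℂ) (a : ℂ) {n : ℕ} {R : ι → ℂ[X]}
    (hR : R ∈ Submodule.pi univ fun _ => degreeLT ℂ n) :
    dilation β a R ∈ Submodule.pi univ fun _ => degreeLT ℂ n :=
  fun i hi => Submodule.smul_mem _ _ (taylor_mem_degreeLT.2 (hR i hi))

theorem exists_eq_single_C_of_hasEigenvector_dilation [DecidableEq ι] {β : ι → ℂ} {a μ : ℂ}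
    {R : ι → ℂ[X]} (ha : a ≠ 0) (hinj : Function.Injective fun i => Complex.exp (a * β i))
    (hR : (dilation β a).HasEigenvector μ R) :
    ∃ (i : ι) (c : ℂ), c ≠ 0 ∧ R = Pi.single i (C c) := by
  have hcomp (j : ι) : Complex.exp (a * β j) • taylor a (R j) = μ • R j :=
    congrFun hR.apply_eq_smul j
  obtain ⟨i, hi⟩ := Function.ne_iff.1 hR.2
  have hμ : Complex.exp (a * β i) = μ := eq_of_smul_taylor_eq_smul hi (hcomp i)
  have hzero (j : ι) (hj : j ≠ i) : R j = 0 := by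
    by_contra hRj
    exact hj (hinj ((eq_of_smul_taylor_eq_smul hRj (hcomp j)).trans hμ.symm))
  have hsingle : R = Pi.single i (R i) := by
    ext1 j
    rcases eq_or_ne j i with rfl | hj
    · rw [Pi.single_eq_same]
    · rw [hzero j hj, Pi.single_eq_of_ne hj]
  have hconst : R i = C ((R i).eval 0) := by
    refine eq_C_of_taylor_eq_self ha (smul_right_injective _ (Complex.exp_ne_zero (a * β i)) ?_)
    exact (hcomp i).trans (by rw [hμ])
  refine ⟨i, (R i).eval 0, fun h0 => hi ?_, by rwa [← hconst]⟩
  rw [hconst, h0, C_0, Pi.zero_apply]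

variable [Fintype ι]

/-- The function `x ↦ ∑ x ^ βᵢ * Rᵢ (log x)`, linear in its coefficients `R`. It is meaningful for
`x > 0` only. -/
noncomputable def logPowerSum (β : ι → ℂ) : (ι → ℂ[X]) →ₗ[ℂ] ℝ → ℂ where
  toFun R x := ∑ i, (x : ℂ) ^ β i * (R i).eval (Real.log x : ℂ)
  map_add' R Q := by
    ext x
    simp [mul_add, Finset.sum_add_distrib]
  map_smul' c R := by
    ext x
    simp [Finset.mul_sum, mul_left_comm]

theorem logPowerSum_apply (β : ι → ℂ) (R : ι → ℂ[X]) (x : ℝ) :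
    logPowerSum β R x = ∑ i, (x : ℂ) ^ β i * (R i).eval (Real.log x : ℂ) := rfl

theorem logPowerSum_single_C [DecidableEq ι] (β : ι → ℂ) (i : ι) (c : ℂ) (x : ℝ) :
    logPowerSum β (Pi.single i (C c)) x = (x : ℂ) ^ β i * c := by
  rw [logPowerSum_apply, Finset.sum_eq_single_of_mem i (Finset.mem_univ i)]
  · simp
  · intro j _ hj
    simp [hj]

theorem cpow_mul_logPowerSum (β : ι → ℂ) (c : ℂ) (R : ι → ℂ[X]) {x : ℝ} (hx : x ≠ 0) :
    (x : ℂ) ^ c * logPowerSum β R x = logPowerSum (fun i => c + β i) R x := by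
  simp only [logPowerSum_apply, Finset.mul_sum, Complex.cpow_add _ _ (Complex.ofReal_ne_zero.2 hx),
    mul_assoc]

theorem logPowerSum_exp_mul (β : ι → ℂ) (R : ι → ℂ[X]) (a : ℝ) {x : ℝ} (hx : 0 < x) :
    logPowerSum β R (Real.exp a * x) = logPowerSum β (dilation β a R) x := by
  have hlog : (Real.log (Real.exp a * x) : ℂ) = Real.log x + a := by
    rw [Real.log_mul (Real.exp_ne_zero a) hx.ne', Real.log_exp, Complex.ofReal_add, add_comm]
  simp only [logPowerSum_apply, dilation_apply, ofReal_exp_mul_cpow a hx.le, hlog, eval_smul,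
    taylor_eval, smul_eq_mul]
  exact Finset.sum_congr rfl fun i _ => by ring

/-- The coefficients `R` for which `∑ x ^ βᵢ * Rᵢ (log x)` is integrable between `0` and `b`. -/
def integrableCoeffs (β : ι → ℂ) (b : ℝ) : Submodule ℂ (ι → ℂ[X]) where
  carrier := {R | IntervalIntegrable (logPowerSum β R) volume 0 b}
  add_mem' hR hQ := by
    rw [mem_ofPred_eq, map_add]
    exact IntervalIntegrable.add hR hQ
  zero_mem' := by
    rw [mem_ofPred_eq, map_zero]
    exact IntervalIntegrable.zero
  smul_mem' c R hR := by
    rw [mem_ofPred_eq, map_smul]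
    exact IntervalIntegrable.smul hR c

variable {β : ι → ℂ} {b : ℝ}

theorem dilation_mem_integrableCoeffs (hb : 0 ≤ b) {a : ℝ} (ha : a ≤ 0) {R : ι → ℂ[X]}
    (hR : R ∈ integrableCoeffs β b) : dilation β a R ∈ integrableCoeffs β b := by
  have hscaled : IntervalIntegrable (fun x => logPowerSum β R (Real.exp a * x)) volume
      (0 / Real.exp a) (b / Real.exp a) := IntervalIntegrable.comp_mul_left hR
  have hb' : b ≤ b / Real.exp a := le_div_self hb (Real.exp_pos a) (Real.exp_le_one_iff.2 ha)
  have hsub : uIcc 0 b ⊆ uIcc (0 / Real.exp a) (b / Real.exp a) := by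
    rw [zero_div]
    exact uIcc_subset_uIcc_left (mem_uIcc_of_le hb hb')
  refine (hscaled.mono_set hsub).congr fun x hx => ?_
  rw [uIoc_of_le hb] at hx
  exact logPowerSum_exp_mul β R a hx.1

theorem neg_one_lt_re_of_single_C_mem_integrableCoeffs [DecidableEq ι] (hb : 0 < b) {i : ι} {c : ℂ}
    (hc : c ≠ 0) (h : Pi.single i (C c) ∈ integrableCoeffs β b) : -1 < (β i).re := by
  have hint : IntervalIntegrable (fun x : ℝ => (x : ℂ) ^ β i * c) volume 0 b :=
    IntervalIntegrable.congr (fun x _ => logPowerSum_single_C β i c x) h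
  rw [intervalIntegrable_iff_integrableOn_Ioo_of_le hb.le] at hint
  refine (intervalIntegral.integrableOn_Ioo_cpow_iff hb).1 ((hint.mul_const c⁻¹).congr ?_)
  simp [hc]

theorem integrableCoeffs_eq_bot (hb : 0 < b) (hinj : Function.Injective β)
    (hre : ∀ i, (β i).re ≤ -1) : integrableCoeffs β b = ⊥ := by
  classical
  by_contra hne
  obtain ⟨a, hexp, ha⟩ : ∃ a : ℝ, (Function.Injective fun i => Complex.exp (a * β i)) ∧ a < 0 :=
    (((eventually_injective_exp_mul hinj).filter_mono (nhdsLT_le_nhdsNE 0)).and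
      self_mem_nhdsWithin).exists
  obtain ⟨R, hRint, hR0⟩ := Submodule.exists_mem_ne_zero_of_ne_bot hne
  obtain ⟨n, hRdeg⟩ := exists_mem_pi_degreeLT R
  let W : Submodule ℂ (ι → ℂ[X]) := Submodule.pi univ fun _ => degreeLT ℂ n
  have : FiniteDimensional ℂ W :=
    .of_fg (fg_pi_degreeLT ι ℂ n)
  have hW : integrableCoeffs β b ⊓ W ≠ ⊥ := Submodule.ne_bot_iff _ |>.2 ⟨R, ⟨hRint, hRdeg⟩, hR0⟩
  obtain ⟨μ, Q, hQ, heig⟩ := exists_hasEigenvector_mem (f := dilation β a) hW fun Q hQ =>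
    ⟨dilation_mem_integrableCoeffs hb.le ha.le hQ.1, dilation_mem_pi_degreeLT β a hQ.2⟩
  obtain ⟨i, c, hc, rfl⟩ :=
    exists_eq_single_C_of_hasEigenvector_dilation (Complex.ofReal_ne_zero.2 ha.ne) hexp heig
  exact (neg_one_lt_re_of_single_C_mem_integrableCoeffs hb hc hQ.1).not_ge (hre i)

theorem eq_zero_of_logPowerSum_eq_rpow_mul {p : ℝ} (hb : 0 < b) (hinj : Function.Injective β)
    (hre : ∀ i, (β i).re ≤ p - 1) {R : ι → ℂ[X]} {f : ℝ → ℂ} (hf : IntegrableOn f (Ioc 0 b))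
    (h : ∀ᵐ x ∂volume.restrict (Ioc 0 b), logPowerSum β R x = (x ^ p : ℝ) * f x) : R = 0 := by
  let γ : ι → ℂ := fun i => β i - p
  have hγinj : Function.Injective γ := fun i j hij => hinj (sub_left_injective hij)
  have hγre (i : ι) : (γ i).re ≤ -1 := by
    simpa [γ, sub_le_iff_le_add, neg_add_eq_sub] using hre i
  suffices hmem : R ∈ integrableCoeffs γ b by
    rwa [integrableCoeffs_eq_bot hb hγinj hγre, Submodule.mem_bot] at hmem
  refine (intervalIntegrable_iff_integrableOn_Ioc_of_le hb.le).2 (hf.congr ?_)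
  filter_upwards [h, ae_restrict_mem measurableSet_Ioc] with x hx hx0
  have hxp : ((x ^ p : ℝ) : ℂ) ≠ 0 := Complex.ofReal_ne_zero.2 (Real.rpow_pos_of_pos hx0.1 p).ne'
  refine mul_left_cancel₀ hxp (hx.symm.trans ?_)
  rw [Complex.ofReal_cpow hx0.1.le, cpow_mul_logPowerSum γ p R hx0.1.ne']
  simp [γ]

theorem uniqueness_of_expansion_at_zero_general {α : ι → ℂ} {p : ℝ} (hb : 0 < b)
    (hinj : Function.Injective α) (hre : ∀ i, (α i).re ≤ p - 1) {P P' : ι → ℂ[X]} {f g : ℝ → ℂ}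
    (hf : IntegrableOn f (Ioc 0 b)) (hg : IntegrableOn g (Ioc 0 b))
    (heq : ∀ᵐ x ∂volume.restrict (Ioc 0 b),
      logPowerSum α P x + (x ^ p : ℝ) * f x = logPowerSum α P' x + (x ^ p : ℝ) * g x) :
    P = P' ∧ ∀ᵐ x ∂volume.restrict (Ioc 0 b), f x = g x := by
  have hP : P = P' := by
    refine sub_eq_zero.1 (eq_zero_of_logPowerSum_eq_rpow_mul hb hinj hre (hg.sub hf) ?_)
    filter_upwards [heq] with x hx
    rw [map_sub, Pi.sub_apply, Pi.sub_apply]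
    linear_combination hx
  refine ⟨hP, ?_⟩
  filter_upwards [heq, ae_restrict_mem measurableSet_Ioc] with x hx hx0
  have hxp : ((x ^ p : ℝ) : ℂ) ≠ 0 := Complex.ofReal_ne_zero.2 (Real.rpow_pos_of_pos hx0.1 p).ne'
  rw [hP] at hx
  exact mul_left_cancel₀ hxp (add_left_cancel hx)

end LogPowerSum

/-- **Uniqueness of finite asymptotic expansions at 0.**
If two expansions `Σ_j x^{α_j} p_j(log x) + x^p f₁(x)` and
`Σ_j x^{α_j} p'_j(log x) + x^p g₁(x)` (with distinct exponents `α_j` of real part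
`≤ p - 1` and locally integrable remainders) agree for a.e. `x ∈ (0,1]`, then the
coefficient polynomials agree, and hence the remainders agree a.e. on `(0,1]`. -/
theorem uniqueness_of_expansion_at_zero
    (p : ℝ) (hp : 0 < p) (N : ℕ) (α : Fin N → ℂ)
    (hdist : Function.Injective α) (hle : ∀ j, (α j).re ≤ p - 1)
    (P P' : Fin N → Polynomial ℂ) (f₁ g₁ : ℝ → ℂ)
    (hf₁ : LocallyIntegrableOn f₁ (Ici 0))
    (hg₁ : LocallyIntegrableOn g₁ (Ici 0))
    (heq : ∀ᵐ (x : ℝ) ∂(volume.restrict (Ioc (0:ℝ) 1)),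
      (∑ j, (x : ℂ) ^ (α j) * (P j).eval ((Real.log x : ℝ) : ℂ)) + (x ^ p : ℝ) * f₁ x =
      (∑ j, (x : ℂ) ^ (α j) * (P' j).eval ((Real.log x : ℝ) : ℂ)) + (x ^ p : ℝ) * g₁ x) :
    (∀ j, P j = P' j) ∧
    ∀ᵐ (x : ℝ) ∂(volume.restrict (Ioc (0:ℝ) 1)), f₁ x = g₁ x := by
  exact (uniqueness_of_expansion_at_zero_general one_pos hdist hle
    (integrableOn_Ioc_of_locallyIntegrableOn_Ici hf₁)
    (integrableOn_Ioc_of_locallyIntegrableOn_Ici hg₁) heq).imp_left congrFun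
end

section
/- Let α ∈ ℂ and k ∈ ℕ₀, and let p, q > 0 satisfy Re α ≤ p − 1 and Re α ≥ −q − 1. Then the function f(x) = x^α (ln x)^k belongs to L_{p,q} and its regularized integral vanishes: −∫_0^∞ x^α (ln x)^k dx = 0. -/
open MeasureTheory Set Polynomial Filter
open scoped Topology Classical

noncomputable section

/-- `f` has a finite asymptotic expansion at `0` with exponents `α j`, coefficient
polynomials (in `log x`) `P j`, and remainder `x ^ p * f₁ x` with `f₁` locally
integrable on `[0,∞)`.  The real parts of the exponents are increasing and `≤ p - 1`,
the exponents are distinct and the coefficient polynomials are nontrivial. -/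
def ExpandsAtZero (p : ℝ) (f : ℝ → ℂ) {N : ℕ} (α : Fin N → ℂ)
    (P : Fin N → Polynomial ℂ) : Prop :=
  Monotone (fun j => (α j).re) ∧ Function.Injective α ∧
  (∀ j, (α j).re ≤ p - 1) ∧ (∀ j, P j ≠ 0) ∧
  ∃ f₁ : ℝ → ℂ, LocallyIntegrableOn f₁ (Ici 0) ∧
    ∀ x : ℝ, 0 < x →
      f x = (∑ j, (x : ℂ) ^ (α j) * (P j).eval ((Real.log x : ℝ) : ℂ)) + (x ^ p : ℝ) * f₁ x

/-- `f` has a finite asymptotic expansion at `∞` with exponents `β j`, coefficient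
polynomials (in `log x`) `Q j`, and remainder `x ^ (-q) * f₂ x` with `f₂`
integrable on `[1,∞)`.  The real parts of the exponents are decreasing and `≥ -q - 1`,
the exponents are distinct and the coefficient polynomials are nontrivial. -/
def ExpandsAtInfty (q : ℝ) (f : ℝ → ℂ) {M : ℕ} (β : Fin M → ℂ)
    (Q : Fin M → Polynomial ℂ) : Prop :=
  Antitone (fun j => (β j).re) ∧ Function.Injective β ∧
  (∀ j, -q - 1 ≤ (β j).re) ∧ (∀ j, Q j ≠ 0) ∧
  ∃ f₂ : ℝ → ℂ, IntegrableOn f₂ (Ici 1) ∧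
    ∀ x : ℝ, 0 < x →
      f x = (∑ j, (x : ℂ) ^ (β j) * (Q j).eval ((Real.log x : ℝ) : ℂ)) + (x ^ (-q) : ℝ) * f₂ x

/-- The class `L_{p,q}((0,∞))` of Brüning–Seeley–Lesch. -/
def MemLpq (p q : ℝ) (f : ℝ → ℂ) : Prop :=
  (∃ (N : ℕ) (α : Fin N → ℂ) (P : Fin N → Polynomial ℂ), ExpandsAtZero p f α P) ∧
  (∃ (M : ℕ) (β : Fin M → ℂ) (Q : Fin M → Polynomial ℂ), ExpandsAtInfty q f β Q)

/-- The coefficient polynomial attached to the exponent `c` in an expansion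
(zero if `c` does not occur among the exponents). -/
def coeffPolyAt {N : ℕ} (c : ℂ) (α : Fin N → ℂ) (P : Fin N → Polynomial ℂ) : Polynomial ℂ :=
  ∑ j, if α j = c then P j else 0

/-- `L` is the limit in the mean of `f` at `0`: the constant coefficient of the
exponent-`0` coefficient polynomial in an expansion of `f` at `0` (for definiteness,
an expansion with remainder exponent `p ≥ 1`, which makes this coefficient unique). -/
def IsLimZero (f : ℝ → ℂ) (L : ℂ) : Prop :=
  ∃ (p : ℝ) (N : ℕ) (α : Fin N → ℂ) (P : Fin N → Polynomial ℂ),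
    1 ≤ p ∧ ExpandsAtZero p f α P ∧ (coeffPolyAt 0 α P).coeff 0 = L

/-- `L` is the limit in the mean of `f` at `∞`. -/
def IsLimInfty (f : ℝ → ℂ) (L : ℂ) : Prop :=
  ∃ (q : ℝ) (M : ℕ) (β : Fin M → ℂ) (Q : Fin M → Polynomial ℂ),
    0 < q ∧ ExpandsAtInfty q f β Q ∧ (coeffPolyAt 0 β Q).coeff 0 = L

/-- `LIM_{x→0} f(x)` (junk value `0` if `f` has no admissible expansion at `0`). -/
def limZero (f : ℝ → ℂ) : ℂ := if h : ∃ L, IsLimZero f L then h.choose else 0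

/-- `LIM_{x→∞} f(x)` (junk value `0` if `f` has no admissible expansion at `∞`). -/
def limInfty (f : ℝ → ℂ) : ℂ := if h : ∃ L, IsLimInfty f L then h.choose else 0

/-- `F(x) = ∫_1^x f(s) ds`. -/
def primitive (f : ℝ → ℂ) : ℝ → ℂ := fun x => ∫ s in (1:ℝ)..x, f s

/-- The regularized integral `⨍_0^∞ f(x) dx := LIM_{x→∞} F(x) - LIM_{x→0} F(x)`,
where `F(x) = ∫_1^x f(s) ds`. -/
def regInt (f : ℝ → ℂ) : ℂ := limInfty (primitive f) - limZero (primitive f)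


/-!
Substituting `x = exp t` turns the finite sums `∑ x ^ c * P c (log x)` into exponential polynomials
in `t`. The primitive of an exponential polynomial is again one, because `Q ↦ c Q + dQ/dt` is
surjective on polynomials. Hence `∫_1^x s ^ α (log s) ^ k ds` is such a sum exactly, which serves as
its expansion both at `0` and at `∞`, so the two regularized limits are the same coefficient.

The regularized limits can be read off from this expansion because they do not depend on the choice
of expansion: in the variable `t` the remainders are integrable near `∓∞`, and an exponential
polynomial integrable near `+∞` has no terms `exp (z t) P(t)` with `Re z ≥ 0`. To see the latter,
difference operators `f ↦ f (· + h) - exp (w h) f`, which preserve integrability, remove all other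
exponents `w` one after another, and a single term `exp (z t) P(t)` is not integrable.
-/

section ExponentialPolynomials

/-- The exponential polynomial `t ↦ ∑ c, exp (c t) R c (t)` on the real line, as a linear function
of the finitely supported family `R` of its coefficient polynomials. Composing it with `log` yields
the finite sums `∑ c, x ^ c R c (log x)` occurring in asymptotic expansions. -/
def expPoly : (ℂ →₀ ℂ[X]) →ₗ[ℂ] ℝ → ℂ :=
  Finsupp.lsum ℂ fun c ↦ LinearMap.pi fun t ↦ Complex.exp (c * t) • leval (t : ℂ)

variable (R : ℂ →₀ ℂ[X])

lemma expPoly_apply (t : ℝ) :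
    expPoly R t = R.sum fun c P ↦ Complex.exp (c * t) * P.eval (t : ℂ) := by
  simp [expPoly, Finsupp.sum, Finset.sum_apply]

@[simp]
lemma expPoly_single (c : ℂ) (P : ℂ[X]) (t : ℝ) :
    expPoly (Finsupp.single c P) t = Complex.exp (c * t) * P.eval (t : ℂ) := by
  rw [expPoly_apply, Finsupp.sum_single_index (by simp)]

lemma continuous_expPoly : Continuous (expPoly R) := by
  have expPoly_eq : expPoly R = fun t : ℝ ↦
      ∑ c ∈ R.support, Complex.exp (c * t) * (R c).eval (t : ℂ) := funext (expPoly_apply R)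
  rw [expPoly_eq]
  fun_prop

lemma expPoly_mapDomain_add (a : ℂ) (t : ℝ) :
    expPoly (R.mapDomain (· + a)) t = Complex.exp (a * t) * expPoly R t := by
  rw [expPoly_apply, expPoly_apply, Finsupp.mul_sum,
    Finsupp.sum_mapDomain_index (by simp) fun _ _ _ ↦ by rw [eval_add, mul_add]]
  simp only [add_mul, Complex.exp_add, mul_assoc, mul_left_comm]

lemma ofReal_cpow_eq_exp_mul_log {x : ℝ} (hx : 0 < x) (c : ℂ) :
    (x : ℂ) ^ c = Complex.exp (c * Real.log x) := by
  rw [Complex.cpow_def_of_ne_zero (mod_cast hx.ne'), Complex.ofReal_log hx.le, mul_comm]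

lemma expPoly_log {x : ℝ} (hx : 0 < x) :
    expPoly R (Real.log x) = R.sum fun c P ↦ (x : ℂ) ^ c * P.eval (Real.log x : ℂ) := by
  simp only [expPoly_apply, ofReal_cpow_eq_exp_mul_log hx]

/-- The coefficient family of the translate `t ↦ expPoly R (t + h)`. -/
def translateCoeffs (h : ℝ) : ℂ →₀ ℂ[X] :=
  Finsupp.onFinset R.support (fun c ↦ Complex.exp (c * h) • taylor (h : ℂ) (R c)) fun c hc ↦ by
    contrapose! hc
    simp [Finsupp.notMem_support_iff.mp hc]

@[simp]
lemma translateCoeffs_apply (h : ℝ) (c : ℂ) :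
    translateCoeffs R h c = Complex.exp (c * h) • taylor (h : ℂ) (R c) :=
  rfl

lemma expPoly_translateCoeffs (h t : ℝ) : expPoly (translateCoeffs R h) t = expPoly R (t + h) := by
  rw [expPoly_apply, expPoly_apply, translateCoeffs, Finsupp.onFinset_sum _ (by simp)]
  refine Finset.sum_congr rfl fun c _ ↦ ?_
  simp only [eval_smul, taylor_eval, Complex.ofReal_add, mul_add, Complex.exp_add, smul_eq_mul]
  ring

/-- The coefficient family of the reflection `t ↦ expPoly R (-t)`. -/
def reflectCoeffs : ℂ →₀ ℂ[X] :=
  (R.mapDomain Neg.neg).mapRange (fun P ↦ P.comp (-X)) zero_comp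

@[simp]
lemma reflectCoeffs_neg_apply (c : ℂ) : reflectCoeffs R (-c) = (R c).comp (-X) := by
  rw [reflectCoeffs, Finsupp.mapRange_apply, Finsupp.mapDomain_apply neg_injective]

lemma expPoly_reflectCoeffs (t : ℝ) : expPoly (reflectCoeffs R) t = expPoly R (-t) := by
  rw [expPoly_apply, expPoly_apply, reflectCoeffs, Finsupp.sum_mapRange_index (by simp),
    Finsupp.sum_mapDomain_index (by simp) fun _ _ _ ↦ by rw [add_comp, eval_add, mul_add]]
  simp [eval_comp]

end ExponentialPolynomials

section Integrability

lemma exists_pos_exp_mul_ne_one {z : ℂ} (hz : z ≠ 0) :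
    ∃ h : ℝ, 0 < h ∧ Complex.exp (z * h) ≠ 1 := by
  have hderiv : HasDerivAt (fun h : ℝ ↦ Complex.exp (z * h)) z 0 := by
    simpa using (((hasDerivAt_id (0 : ℂ)).const_mul z).cexp).comp_ofReal (z := 0)
  have hne : ∀ᶠ h : ℝ in 𝓝[>] 0, Complex.exp (z * h) ≠ 1 :=
    (hderiv.eventually_ne hz).filter_mono (nhdsWithin_mono 0 fun _ hx ↦ ne_of_gt hx)
  exact (eventually_mem_nhdsWithin.and hne).exists

lemma one_isBigO_eval_ofReal {P : ℂ[X]} (hP : P ≠ 0) :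
    (fun _ : ℝ ↦ (1 : ℝ)) =O[atTop] fun t : ℝ ↦ P.eval (t : ℂ) := by
  rcases lt_or_ge 0 P.degree with hdeg | hdeg
  · have htop : Tendsto (fun t : ℝ ↦ ‖P.eval (t : ℂ)‖) atTop atTop :=
      P.tendsto_norm_atTop hdeg (by simpa using tendsto_abs_atTop_atTop)
    refine Asymptotics.IsBigO.of_bound 1 ((htop.eventually_ge_atTop 1).mono fun t ht ↦ ?_)
    simpa using ht
  · obtain ⟨a, rfl⟩ : ∃ a, P = C a := ⟨_, eq_C_of_degree_le_zero hdeg⟩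
    have ha : a ≠ 0 := by simpa using hP
    simpa using Asymptotics.isBigO_const_const (1 : ℝ) ha (atTop : Filter ℝ)

lemma one_isBigO_exp_mul {z : ℂ} (hz : 0 ≤ z.re) :
    (fun _ : ℝ ↦ (1 : ℝ)) =O[atTop] fun t : ℝ ↦ Complex.exp (z * t) := by
  refine Asymptotics.IsBigO.of_bound 1 ((eventually_ge_atTop 0).mono fun t ht ↦ ?_)
  simpa [Complex.norm_exp] using mul_nonneg hz ht

lemma not_integrableOn_expPoly_single {z : ℂ} (hz : 0 ≤ z.re) {P : ℂ[X]} (hP : P ≠ 0) (a : ℝ) :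
    ¬ IntegrableOn (expPoly (Finsupp.single z P)) (Ioi a) := by
  intro hint
  have hbig : (fun _ : ℝ ↦ (1 : ℝ)) =O[atTop] expPoly (Finsupp.single z P) := by
    simpa [funext (expPoly_single z P)] using
      (one_isBigO_exp_mul hz).mul (one_isBigO_eval_ofReal hP)
  obtain ⟨b, hb⟩ := integrableAtFilter_atTop_iff.mp <| hbig.integrableAtFilter
    stronglyMeasurable_const.stronglyMeasurableAtFilter ⟨Ioi a, Ioi_mem_atTop a, hint⟩
  simp [integrableOn_const_iff] at hb

lemma degree_taylor_sub_lt {K : Type*} [CommRing K] (a : K) {P : K[X]} (hP : P ≠ 0) :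
    (taylor a P - P).degree < P.degree := by
  simpa using degree_sub_lt_left (degree_taylor P a) (by simpa using hP) (leadingCoeff_taylor a P)

lemma taylor_ne_smul {K : Type*} [CommRing K] [IsDomain K] (a : K) {P : K[X]} (hP : P ≠ 0) {b : K}
    (hb : b ≠ 1) : taylor a P ≠ b • P := by
  intro heq
  have hlead : P.leadingCoeff = b * P.leadingCoeff := by
    simpa [smul_eq_C_mul] using congrArg leadingCoeff heq
  exact hb (mul_right_cancel₀ (leadingCoeff_ne_zero.mpr hP) (by rw [one_mul, ← hlead]))

lemma integrableOn_expPoly_translateCoeffs_sub_smul {R : ℂ →₀ ℂ[X]} {a : ℝ}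
    (hR : IntegrableOn (expPoly R) (Ioi a)) {h : ℝ} (hh : 0 ≤ h) (b : ℂ) :
    IntegrableOn (expPoly (translateCoeffs R h - b • R)) (Ioi a) := by
  have htranslate : IntegrableOn (expPoly (translateCoeffs R h)) (Ioi a) := by
    rw [funext (expPoly_translateCoeffs R h)]
    have := (measurePreserving_add_right volume h).integrableOn_comp_preimage
      (measurableEmbedding_addRight h) (f := expPoly R) (s := Ioi (a + h))
    simpa [Function.comp_def] using this.mpr (hR.mono_set (Ioi_subset_Ioi (by linarith)))
  rw [map_sub, map_smul]
  exact htranslate.sub (hR.smul b)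

lemma exists_integrableOn_expPoly_apply_eq_zero {w z : ℂ} (hwz : w ≠ z) {a : ℝ} (R : ℂ →₀ ℂ[X])
    (hR : IntegrableOn (expPoly R) (Ioi a)) (hRz : R z ≠ 0) :
    ∃ S : ℂ →₀ ℂ[X], IntegrableOn (expPoly S) (Ioi a) ∧ S z ≠ 0 ∧ S w = 0 ∧
      S.support ⊆ R.support := by
  induction hd : (R w).degree using WellFoundedLT.induction generalizing R with
  | ind d ih =>
    rcases eq_or_ne (R w) 0 with hRw | hRw
    · exact ⟨R, hR, hRz, hRw, subset_rfl⟩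
    obtain ⟨h, hh, hne⟩ := exists_pos_exp_mul_ne_one (sub_ne_zero.mpr hwz)
    have hexp : Complex.exp (w * h) = Complex.exp ((w - z) * h) * Complex.exp (z * h) := by
      rw [← Complex.exp_add]
      ring_nf
    set T := translateCoeffs R h - Complex.exp (w * h) • R with hT
    have hTz : T z ≠ 0 := by
      have hTz_eq : T z = Complex.exp (z * h) •
          (taylor (h : ℂ) (R z) - Complex.exp ((w - z) * h) • R z) := by
        simp [hT, hexp, smul_sub, smul_smul, mul_comm]
      rw [hTz_eq]
      exact smul_ne_zero (Complex.exp_ne_zero _) (sub_ne_zero.mpr (taylor_ne_smul _ hRz hne))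
    have hTw : (T w).degree < d := by
      have hTw_eq : T w = Complex.exp (w * h) • (taylor (h : ℂ) (R w) - R w) := by
        simp [hT, smul_sub]
      rw [hTw_eq, smul_eq_C_mul, degree_C_mul (Complex.exp_ne_zero _), ← hd]
      exact degree_taylor_sub_lt _ hRw
    have hTsupp : T.support ⊆ R.support := by
      intro c
      contrapose!
      simp +contextual [hT]
    obtain ⟨S, hS, hSz, hSw, hSsupp⟩ := ih _ hTw T
      (integrableOn_expPoly_translateCoeffs_sub_smul hR hh.le _) hTz rfl
    exact ⟨S, hS, hSz, hSw, hSsupp.trans hTsupp⟩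

theorem eq_zero_of_integrableOn_expPoly_Ioi {R : ℂ →₀ ℂ[X]} {a : ℝ}
    (hR : IntegrableOn (expPoly R) (Ioi a)) {z : ℂ} (hz : 0 ≤ z.re) : R z = 0 := by
  induction hs : R.support using Finset.strongInduction generalizing R with
  | H s ih =>
    by_contra hRz
    by_cases hsupp : ∃ w ∈ R.support, w ≠ z
    · obtain ⟨w, hw, hwz⟩ := hsupp
      obtain ⟨S, hS, hSz, hSw, hSsupp⟩ := exists_integrableOn_expPoly_apply_eq_zero hwz R hR hRz
      have hssub : S.support ⊂ s :=
        hs ▸ (Finset.ssubset_iff_of_subset hSsupp).mpr ⟨w, hw, by simpa using hSw⟩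
      exact hSz (ih _ hssub hS rfl)
    · push Not at hsupp
      have hsingle : R = Finsupp.single z (R z) := by
        rw [← Finsupp.support_subset_singleton]
        simpa [Finset.subset_iff] using hsupp
      exact not_integrableOn_expPoly_single hz hRz a (hsingle ▸ hR)

theorem eq_zero_of_integrableOn_expPoly_Iio {R : ℂ →₀ ℂ[X]} {a : ℝ}
    (hR : IntegrableOn (expPoly R) (Iio a)) {z : ℂ} (hz : z.re ≤ 0) : R z = 0 := by
  have hreflect : IntegrableOn (expPoly (reflectCoeffs R)) (Ioi (-a)) := by
    rw [funext (expPoly_reflectCoeffs R)]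
    have := (Measure.measurePreserving_neg volume).integrableOn_comp_preimage
      (measurableEmbedding_neg) (f := expPoly R) (s := Iio a)
    simpa [Function.comp_def] using this.mpr hR
  have hcomp : (R z).comp (-X) = 0 := by
    rw [← reflectCoeffs_neg_apply]
    exact eq_zero_of_integrableOn_expPoly_Ioi hreflect (by simpa using hz)
  simpa [comp_assoc] using congrArg (fun P ↦ P.comp (-X)) hcomp

end Integrability

section UniquenessOfLimits

lemma integrableOn_rpow_exp_smul_comp_exp {E : Type*} [NormedAddCommGroup E] [NormedSpace ℝ E]
    {g : ℝ → E} {s : Set ℝ} (hs : MeasurableSet s) (hg : IntegrableOn g (Real.exp '' s)) {r : ℝ}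
    (hr : ∀ t ∈ s, (r - 1) * t ≤ 0) :
    IntegrableOn (fun t ↦ Real.exp t ^ r • g (Real.exp t)) s := by
  have hsubst : IntegrableOn (fun t ↦ Real.exp t • g (Real.exp t)) s :=
    (integrableOn_image_iff_integrableOn_deriv_smul_of_monotoneOn hs
      (fun t _ ↦ (Real.hasDerivAt_exp t).hasDerivWithinAt) (Real.exp_monotone.monotoneOn s) g).mp hg
  have hbound : ∀ᵐ t ∂volume.restrict s, ‖Real.exp ((r - 1) * t)‖ ≤ 1 :=
    (ae_restrict_iff' hs).mpr <| .of_forall fun t ht ↦ by simpa using hr t ht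
  have hexp (t : ℝ) : Real.exp t ^ r = Real.exp ((r - 1) * t) * Real.exp t := by
    rw [← Real.exp_mul, ← Real.exp_add]
    ring_nf
  simp only [hexp, mul_smul]
  exact hsubst.bdd_smul 1 (Continuous.aestronglyMeasurable (by fun_prop)) hbound

/-- The coefficient family with coefficient `P j` at the exponent `α j`, so that `coeffPolyAt`
becomes function application. -/
def coeffFamily {N : ℕ} (α : Fin N → ℂ) (P : Fin N → ℂ[X]) : ℂ →₀ ℂ[X] :=
  ∑ j, Finsupp.single (α j) (P j)

lemma coeffFamily_apply {N : ℕ} (α : Fin N → ℂ) (P : Fin N → ℂ[X]) (c : ℂ) :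
    coeffFamily α P c = coeffPolyAt c α P := by
  simp [coeffFamily, coeffPolyAt, Finsupp.single_apply]

lemma expPoly_coeffFamily {N : ℕ} (α : Fin N → ℂ) (P : Fin N → ℂ[X]) (t : ℝ) :
    expPoly (coeffFamily α P) t = ∑ j, Complex.exp (α j * t) * (P j).eval (t : ℂ) := by
  simp [coeffFamily, Finset.sum_apply]

variable {f : ℝ → ℂ}

lemma ExpandsAtZero.integrableOn_comp_exp_sub_expPoly {p : ℝ} {N : ℕ} {α : Fin N → ℂ}
    {P : Fin N → ℂ[X]} (h : ExpandsAtZero p f α P) (hp : 1 ≤ p) :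
    IntegrableOn (fun t ↦ f (Real.exp t) - expPoly (coeffFamily α P) t) (Iio 0) := by
  obtain ⟨-, -, -, -, f₁, hf₁, hexpand⟩ := h
  have hf₁' : IntegrableOn f₁ (Real.exp '' Iio 0) := by
    rw [Real.image_exp_Iio, Real.exp_zero]
    exact (hf₁.integrableOn_compact_subset Icc_subset_Ici_self isCompact_Icc).mono_set
      Ioo_subset_Icc_self
  convert integrableOn_rpow_exp_smul_comp_exp measurableSet_Iio hf₁' (r := p) fun t ht ↦
    mul_nonpos_of_nonneg_of_nonpos (by linarith) (le_of_lt ht) using 2 with t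
  rw [hexpand _ (Real.exp_pos t), expPoly_coeffFamily]
  simp only [ofReal_cpow_eq_exp_mul_log (Real.exp_pos t), Real.log_exp, add_sub_cancel_left,
    Complex.real_smul]

lemma ExpandsAtInfty.integrableOn_comp_exp_sub_expPoly {q : ℝ} {M : ℕ} {β : Fin M → ℂ}
    {Q : Fin M → ℂ[X]} (h : ExpandsAtInfty q f β Q) (hq : -1 ≤ q) :
    IntegrableOn (fun t ↦ f (Real.exp t) - expPoly (coeffFamily β Q) t) (Ioi 0) := by
  obtain ⟨-, -, -, -, f₂, hf₂, hexpand⟩ := h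
  have hf₂' : IntegrableOn f₂ (Real.exp '' Ioi 0) := by
    rw [Real.image_exp_Ioi, Real.exp_zero]
    exact hf₂.mono_set Ioi_subset_Ici_self
  convert integrableOn_rpow_exp_smul_comp_exp measurableSet_Ioi hf₂' (r := -q) fun t ht ↦
    mul_nonpos_of_nonpos_of_nonneg (by linarith) (le_of_lt ht) using 2 with t
  rw [hexpand _ (Real.exp_pos t), expPoly_coeffFamily]
  simp only [ofReal_cpow_eq_exp_mul_log (Real.exp_pos t), Real.log_exp, add_sub_cancel_left,
    Complex.real_smul]

variable {L L' : ℂ}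

theorem IsLimZero.unique (h : IsLimZero f L) (h' : IsLimZero f L') : L = L' := by
  obtain ⟨p, N, α, P, hp, hexpand, rfl⟩ := h
  obtain ⟨p', N', α', P', hp', hexpand', rfl⟩ := h'
  have hint : IntegrableOn (expPoly (coeffFamily α P - coeffFamily α' P')) (Iio 0) := by
    convert (hexpand'.integrableOn_comp_exp_sub_expPoly hp').sub
      (hexpand.integrableOn_comp_exp_sub_expPoly hp) using 1
    ext t
    simp
  have hcoeff := eq_zero_of_integrableOn_expPoly_Iio hint (z := 0) le_rfl
  rw [Finsupp.sub_apply, sub_eq_zero, coeffFamily_apply, coeffFamily_apply] at hcoeff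
  rw [hcoeff]

theorem IsLimInfty.unique (h : IsLimInfty f L) (h' : IsLimInfty f L') : L = L' := by
  obtain ⟨q, M, β, Q, hq, hexpand, rfl⟩ := h
  obtain ⟨q', M', β', Q', hq', hexpand', rfl⟩ := h'
  have hint : IntegrableOn (expPoly (coeffFamily β Q - coeffFamily β' Q')) (Ioi 0) := by
    convert (hexpand'.integrableOn_comp_exp_sub_expPoly (by linarith)).sub
      (hexpand.integrableOn_comp_exp_sub_expPoly (by linarith)) using 1
    ext t
    simp
  have hcoeff := eq_zero_of_integrableOn_expPoly_Ioi hint (z := 0) le_rfl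
  rw [Finsupp.sub_apply, sub_eq_zero, coeffFamily_apply, coeffFamily_apply] at hcoeff
  rw [hcoeff]

lemma IsLimZero.limZero_eq (h : IsLimZero f L) : limZero f = L := by
  have hex : ∃ L, IsLimZero f L := ⟨L, h⟩
  rw [limZero, dif_pos hex]
  exact hex.choose_spec.unique h

lemma IsLimInfty.limInfty_eq (h : IsLimInfty f L) : limInfty f = L := by
  have hex : ∃ L, IsLimInfty f L := ⟨L, h⟩
  rw [limInfty, dif_pos hex]
  exact hex.choose_spec.unique h

end UniquenessOfLimits

section ExpansionsOfExponentialPolynomials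

lemma exists_equiv_fin_monotone {ι κ : Type*} [LinearOrder κ] (s : Finset ι) (u : ι → κ) :
    ∃ e : Fin s.card ≃ s, Monotone fun j ↦ u (e j) :=
  ⟨(Tuple.sort fun j ↦ u (s.equivFin.symm j)).trans s.equivFin.symm,
    Tuple.monotone_sort fun j ↦ u (s.equivFin.symm j)⟩

lemma sum_comp_equiv_support {ι κ M A : Type*} [Fintype ι] [Zero M] [AddCommMonoid A] (R : κ →₀ M)
    (e : ι ≃ R.support) (g : κ → M → A) : ∑ j, g (e j) (R (e j)) = R.sum g :=
  (e.sum_comp fun c ↦ g c (R c)).trans (Finset.sum_coe_sort R.support fun c ↦ g c (R c))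

lemma coeffPolyAt_comp_equiv_support {N : ℕ} (R : ℂ →₀ ℂ[X]) (e : Fin N ≃ R.support) (c : ℂ) :
    coeffPolyAt c (fun j ↦ e j) (fun j ↦ R (e j)) = R c := by
  rw [coeffPolyAt, sum_comp_equiv_support R e fun w P ↦ if w = c then P else 0,
    Finsupp.sum_ite_self_eq']

variable {f : ℝ → ℂ} {R : ℂ →₀ ℂ[X]}

lemma exists_expandsAtZero_of_eqOn_expPoly_log
    (hf : EqOn f (fun x ↦ expPoly R (Real.log x)) (Ioi 0)) {p : ℝ}
    (hR : ∀ c ∈ R.support, c.re ≤ p - 1) :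
    ∃ (N : ℕ) (α : Fin N → ℂ) (P : Fin N → ℂ[X]),
      ExpandsAtZero p f α P ∧ ∀ c, coeffPolyAt c α P = R c := by
  obtain ⟨e, he⟩ := exists_equiv_fin_monotone R.support Complex.re
  refine ⟨_, fun j ↦ e j, fun j ↦ R (e j), ⟨he, Subtype.val_injective.comp e.injective,
    fun j ↦ hR _ (e j).2, fun j ↦ Finsupp.mem_support_iff.mp (e j).2, 0, locallyIntegrableOn_zero,
    fun x hx ↦ ?_⟩, coeffPolyAt_comp_equiv_support R e⟩
  rw [sum_comp_equiv_support R e fun c P ↦ (x : ℂ) ^ c * P.eval (Real.log x : ℂ), hf hx]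
  simp [expPoly_log R hx]

lemma exists_expandsAtInfty_of_eqOn_expPoly_log
    (hf : EqOn f (fun x ↦ expPoly R (Real.log x)) (Ioi 0)) {q : ℝ}
    (hR : ∀ c ∈ R.support, -q - 1 ≤ c.re) :
    ∃ (M : ℕ) (β : Fin M → ℂ) (Q : Fin M → ℂ[X]),
      ExpandsAtInfty q f β Q ∧ ∀ c, coeffPolyAt c β Q = R c := by
  obtain ⟨e, he⟩ := exists_equiv_fin_monotone R.support fun c ↦ OrderDual.toDual c.re
  refine ⟨_, fun j ↦ e j, fun j ↦ R (e j), ⟨he, Subtype.val_injective.comp e.injective,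
    fun j ↦ hR _ (e j).2, fun j ↦ Finsupp.mem_support_iff.mp (e j).2, 0, integrableOn_zero,
    fun x hx ↦ ?_⟩, coeffPolyAt_comp_equiv_support R e⟩
  rw [sum_comp_equiv_support R e fun c P ↦ (x : ℂ) ^ c * P.eval (Real.log x : ℂ), hf hx]
  simp [expPoly_log R hx]

lemma limZero_eq_of_eqOn_expPoly_log (hf : EqOn f (fun x ↦ expPoly R (Real.log x)) (Ioi 0)) :
    limZero f = (R 0).coeff 0 := by
  obtain ⟨m, hm⟩ := (insert 0 (R.support.image Complex.re)).exists_le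
  simp only [Finset.forall_mem_insert, Finset.forall_mem_image] at hm
  obtain ⟨N, α, P, hexpand, hcoeff⟩ :=
    exists_expandsAtZero_of_eqOn_expPoly_log hf (p := m + 1) (by simpa using hm.2)
  exact IsLimZero.limZero_eq
    ⟨m + 1, N, α, P, by linarith [hm.1], hexpand, congrArg (coeff · 0) (hcoeff 0)⟩

lemma limInfty_eq_of_eqOn_expPoly_log (hf : EqOn f (fun x ↦ expPoly R (Real.log x)) (Ioi 0)) :
    limInfty f = (R 0).coeff 0 := by
  obtain ⟨m, hm⟩ := (insert 0 (R.support.image fun c ↦ -c.re)).exists_le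
  simp only [Finset.forall_mem_insert, Finset.forall_mem_image] at hm
  obtain ⟨M, β, Q, hexpand, hcoeff⟩ :=
    exists_expandsAtInfty_of_eqOn_expPoly_log hf (q := m + 1) fun c hc ↦ by linarith [hm.2 hc]
  exact IsLimInfty.limInfty_eq
    ⟨m + 1, M, β, Q, by linarith [hm.1], hexpand, congrArg (coeff · 0) (hcoeff 0)⟩

end ExpansionsOfExponentialPolynomials

section Primitives

lemma exists_derivative_eq {K : Type*} [Field K] [CharZero K] (P : K[X]) :
    ∃ Q : K[X], derivative Q = P := by
  induction P using Polynomial.induction_on' with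
  | add P₁ P₂ h₁ h₂ =>
    obtain ⟨Q₁, rfl⟩ := h₁
    obtain ⟨Q₂, rfl⟩ := h₂
    exact ⟨Q₁ + Q₂, derivative_add⟩
  | monomial n a =>
    refine ⟨monomial (n + 1) (a / (n + 1)), ?_⟩
    have hn : (n + 1 : K) ≠ 0 := n.cast_add_one_ne_zero
    simp [hn]

lemma exists_smul_add_derivative_eq {K : Type*} [Field K] [CharZero K] (c : K) (P : K[X]) :
    ∃ Q : K[X], c • Q + derivative Q = P := by
  rcases eq_or_ne c 0 with rfl | hc
  · simpa using exists_derivative_eq P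
  induction hd : P.degree using WellFoundedLT.induction generalizing P with
  | ind d ih =>
    rcases eq_or_ne P 0 with rfl | hP
    · exact ⟨0, by simp⟩
    obtain ⟨Q, hQ⟩ := ih _ (hd ▸ degree_derivative_lt hP) (derivative P) rfl
    refine ⟨c⁻¹ • (P - Q), ?_⟩
    rw [derivative_smul, derivative_sub, ← hQ, add_sub_cancel_right, smul_inv_smul₀ hc,
      inv_smul_smul₀ hc, sub_add_cancel]

lemma hasDerivAt_expPoly_single (c : ℂ) (Q : ℂ[X]) (t : ℝ) :
    HasDerivAt (expPoly (Finsupp.single c Q))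
      (expPoly (Finsupp.single c (c • Q + derivative Q)) t) t := by
  have hexp : HasDerivAt (fun z : ℂ ↦ Complex.exp (c * z)) (Complex.exp (c * t) * c) t := by
    simpa using ((hasDerivAt_id (t : ℂ)).const_mul c).cexp
  rw [funext (expPoly_single c Q)]
  refine (hexp.mul (Q.hasDerivAt t)).comp_ofReal.congr_deriv ?_
  simp only [expPoly_single, eval_add, eval_smul, smul_eq_mul]
  ring

lemma exists_hasDerivAt_expPoly (R : ℂ →₀ ℂ[X]) :
    ∃ S : ℂ →₀ ℂ[X], ∀ t, HasDerivAt (expPoly S) (expPoly R t) t := by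
  induction R using Finsupp.induction_linear with
  | zero => exact ⟨0, fun t ↦ by simp⟩
  | add R₁ R₂ h₁ h₂ =>
    obtain ⟨S₁, hS₁⟩ := h₁
    obtain ⟨S₂, hS₂⟩ := h₂
    exact ⟨S₁ + S₂, fun t ↦ by simpa using (hS₁ t).add (hS₂ t)⟩
  | single c P =>
    obtain ⟨Q, rfl⟩ := exists_smul_add_derivative_eq c P
    exact ⟨Finsupp.single c Q, hasDerivAt_expPoly_single c Q⟩

lemma exists_hasDerivAt_expPoly_log (R : ℂ →₀ ℂ[X]) :
    ∃ S : ℂ →₀ ℂ[X], ∀ x : ℝ, 0 < x →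
      HasDerivAt (fun y ↦ expPoly S (Real.log y)) (expPoly R (Real.log x)) x := by
  obtain ⟨S, hS⟩ := exists_hasDerivAt_expPoly (R.mapDomain (· + 1))
  refine ⟨S, fun x hx ↦ ((hS _).scomp x (Real.hasDerivAt_log hx.ne')).congr_deriv ?_⟩
  have hx' : (x : ℂ) ≠ 0 := mod_cast hx.ne'
  rw [expPoly_mapDomain_add, ← ofReal_cpow_eq_exp_mul_log hx, Complex.cpow_one, Complex.real_smul,
    Complex.ofReal_inv, inv_mul_cancel_left₀ hx']

lemma exists_eqOn_primitive_expPoly_log {f : ℝ → ℂ} {R : ℂ →₀ ℂ[X]}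
    (hf : EqOn f (fun x ↦ expPoly R (Real.log x)) (Ioi 0)) :
    ∃ S : ℂ →₀ ℂ[X], EqOn (primitive f) (fun x ↦ expPoly S (Real.log x)) (Ioi 0) := by
  obtain ⟨S, hS⟩ := exists_hasDerivAt_expPoly_log R
  refine ⟨S - Finsupp.single 0 (C (expPoly S 0)), fun x hx ↦ ?_⟩
  have hsub : uIcc 1 x ⊆ Ioi 0 := fun y hy ↦ (lt_min one_pos hx).trans_le hy.1
  have hcont : ContinuousOn (fun y ↦ expPoly R (Real.log y)) (uIcc 1 x) :=
    (continuous_expPoly R).comp_continuousOn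
      (Real.continuousOn_log.mono fun y hy ↦ (hsub hy).ne')
  calc primitive f x
      = ∫ y in (1 : ℝ)..x, expPoly R (Real.log y) :=
        intervalIntegral.integral_congr (hf.mono hsub)
    _ = expPoly S (Real.log x) - expPoly S (Real.log 1) :=
        intervalIntegral.integral_eq_sub_of_hasDerivAt (fun y hy ↦ hS y (hsub hy))
          hcont.intervalIntegrable
    _ = expPoly (S - Finsupp.single 0 (C (expPoly S 0))) (Real.log x) := by simp

end Primitives

section RegularizedIntegral

variable {f : ℝ → ℂ} {R : ℂ →₀ ℂ[X]}

theorem memLpq_of_eqOn_expPoly_log (hf : EqOn f (fun x ↦ expPoly R (Real.log x)) (Ioi 0))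
    {p q : ℝ} (hp : ∀ c ∈ R.support, c.re ≤ p - 1) (hq : ∀ c ∈ R.support, -q - 1 ≤ c.re) :
    MemLpq p q f := by
  obtain ⟨N, α, P, hzero, -⟩ := exists_expandsAtZero_of_eqOn_expPoly_log hf hp
  obtain ⟨M, β, Q, hinfty, -⟩ := exists_expandsAtInfty_of_eqOn_expPoly_log hf hq
  exact ⟨⟨N, α, P, hzero⟩, ⟨M, β, Q, hinfty⟩⟩

theorem regInt_eq_zero_of_eqOn_expPoly_log
    (hf : EqOn f (fun x ↦ expPoly R (Real.log x)) (Ioi 0)) : regInt f = 0 := by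
  obtain ⟨S, hS⟩ := exists_eqOn_primitive_expPoly_log hf
  rw [regInt, limInfty_eq_of_eqOn_expPoly_log hS, limZero_eq_of_eqOn_expPoly_log hS, sub_self]

theorem regInt_cpow_mul_log_pow_eq_zero_general {p q : ℝ}
    (hf : ∀ x : ℝ, 0 < x → f x = R.sum fun c P ↦ (x : ℂ) ^ c * P.eval (Real.log x : ℂ))
    (hp : ∀ c ∈ R.support, c.re ≤ p - 1) (hq : ∀ c ∈ R.support, -q - 1 ≤ c.re) :
    MemLpq p q f ∧ regInt f = 0 := by
  have hf_log : EqOn f (fun x ↦ expPoly R (Real.log x)) (Ioi 0) := fun x hx ↦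
    (hf x hx).trans (expPoly_log R hx).symm
  exact ⟨memLpq_of_eqOn_expPoly_log hf_log hp hq, regInt_eq_zero_of_eqOn_expPoly_log hf_log⟩

end RegularizedIntegral

/-- **Vanishing of the regularized integral of `x^α log^k x`.**
If `Re α ≤ p - 1` and `Re α ≥ -q - 1` then `x ↦ x^α (log x)^k` belongs to `L_{p,q}`
and its regularized integral `⨍_0^∞ x^α (log x)^k dx` is zero: the contributions at
`0` and at `∞` cancel. -/
theorem regInt_cpow_mul_log_pow_eq_zero (α : ℂ) (k : ℕ) (p q : ℝ)
    (hp : 0 < p) (hq : 0 < q) (h₁ : α.re ≤ p - 1) (h₂ : -q - 1 ≤ α.re) :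
    MemLpq p q (fun x : ℝ => (x : ℂ) ^ α * ((Real.log x : ℝ) : ℂ) ^ k) ∧
    regInt (fun x : ℝ => (x : ℂ) ^ α * ((Real.log x : ℝ) : ℂ) ^ k) = 0 := by
  have hsupp : (Finsupp.single α (X ^ k : ℂ[X])).support = {α} :=
    Finsupp.support_single α (pow_ne_zero k X_ne_zero)
  exact regInt_cpow_mul_log_pow_eq_zero_general (R := Finsupp.single α (X ^ k))
    (fun x _ ↦ by simp) (by simpa [hsupp] using h₁) (by simpa [hsupp] using h₂)

end
end

section
/- (Supplement to the Singular Asymptotics Lemma, real version) Let φ ∈ C([0,1]), and let ε > 0, T > 0, c > 0. Let σ: (0,1]×(0,1] → ℂ be measurable and satisfy |σ(x,ζ)| ≤ φ(x) ζ^{−1} for all 0 < ζ ≤ 1, 0 < x ≤ 1, and |σ(θ s, s)| ≤ c θ^{−T} s^{ε−1} for all 0 < θ ≤ 1, 0 < s ≤ 1. Then there is a constant C such that ∫_0^1 |σ(θ s, s)| ds ≤ C (1 + |ln θ|) for all 0 < θ ≤ 1; in particular ∫_0^1 |σ(θ s, s)| ds = O(|ln θ|) as θ → 0⁺. -/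
open MeasureTheory Set

/-!
Cut the integral at `δ = θ ^ (T / ε)`. Below `δ` the bound `c θ⁻ᵀ s ^ (ε - 1)` integrates to
`c θ⁻ᵀ δ ^ ε / ε = c / ε`, uniformly in `θ`; above `δ` the bound `M s⁻¹` integrates to
`M log (1 / δ) = M (T / ε) |log θ|`.
-/

section SingleVariable

variable {E : Type*} [NormedAddCommGroup E] {f : ℝ → E} {A M b c δ ε θ T : ℝ}

lemma integrableOn_norm_of_norm_le {X : Type*} [MeasurableSpace X] {μ : Measure X} {s : Set X}
    {u : X → E} {g : X → ℝ} (hs : MeasurableSet s) (hu : AEStronglyMeasurable u (μ.restrict s))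
    (hg : IntegrableOn g s μ) (hug : ∀ x ∈ s, ‖u x‖ ≤ g x) :
    IntegrableOn (fun x ↦ ‖u x‖) s μ :=
  (Integrable.mono' hg hu (ae_restrict_of_forall_mem hs hug)).norm

lemma integrableOn_const_mul_rpow_sub_one (hε : 0 < ε) (hδ : 0 ≤ δ) :
    IntegrableOn (fun s : ℝ ↦ A * s ^ (ε - 1)) (Ioc 0 δ) :=
  (intervalIntegrable_iff_integrableOn_Ioc_of_le hδ).1
    ((intervalIntegral.intervalIntegrable_rpow' (by linarith)).const_mul A)

lemma setIntegral_const_mul_rpow_sub_one (hε : 0 < ε) (hδ : 0 ≤ δ) :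
    ∫ s in Ioc 0 δ, A * s ^ (ε - 1) = A * (δ ^ ε / ε) := by
  rw [← intervalIntegral.integral_of_le hδ, intervalIntegral.integral_const_mul,
    integral_rpow (Or.inl (by linarith)), sub_add_cancel, Real.zero_rpow hε.ne', sub_zero]

lemma integrableOn_const_mul_inv (hδ : 0 < δ) (hδb : δ ≤ b) :
    IntegrableOn (fun s : ℝ ↦ M * s⁻¹) (Ioc δ b) :=
  (intervalIntegrable_iff_integrableOn_Ioc_of_le hδb).1
    ((intervalIntegrable_inv_iff.2 (Or.inr (notMem_uIcc_of_lt hδ (hδ.trans_le hδb)))).const_mul M)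

lemma setIntegral_const_mul_inv (hδ : 0 < δ) (hδb : δ ≤ b) :
    ∫ s in Ioc δ b, M * s⁻¹ = M * Real.log (b / δ) := by
  rw [← intervalIntegral.integral_of_le hδb, intervalIntegral.integral_const_mul,
    integral_inv_of_pos hδ (hδ.trans_le hδb)]

lemma setIntegral_norm_le_of_le_rpow_of_le_inv (hε : 0 < ε) (hδ : 0 < δ) (hδb : δ ≤ b)
    (hf : AEStronglyMeasurable f (volume.restrict (Ioc 0 b)))
    (hrpow : ∀ s ∈ Ioc 0 δ, ‖f s‖ ≤ A * s ^ (ε - 1)) (hinv : ∀ s ∈ Ioc δ b, ‖f s‖ ≤ M * s⁻¹) :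
    ∫ s in Ioc 0 b, ‖f s‖ ≤ A * (δ ^ ε / ε) + M * Real.log (b / δ) := by
  have int_rpow := integrableOn_const_mul_rpow_sub_one (A := A) hε hδ.le
  have int_inv := integrableOn_const_mul_inv (M := M) hδ hδb
  have int_near : IntegrableOn (fun s ↦ ‖f s‖) (Ioc 0 δ) :=
    integrableOn_norm_of_norm_le measurableSet_Ioc
      (hf.mono_set (Ioc_subset_Ioc_right hδb)) int_rpow hrpow
  have int_far : IntegrableOn (fun s ↦ ‖f s‖) (Ioc δ b) :=
    integrableOn_norm_of_norm_le measurableSet_Ioc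
      (hf.mono_set (Ioc_subset_Ioc_left hδ.le)) int_inv hinv
  calc ∫ s in Ioc 0 b, ‖f s‖
      = (∫ s in Ioc 0 δ, ‖f s‖) + ∫ s in Ioc δ b, ‖f s‖ := by
        rw [← Ioc_union_Ioc_eq_Ioc hδ.le hδb,
          setIntegral_union (Ioc_disjoint_Ioc_of_le le_rfl) measurableSet_Ioc int_near int_far]
    _ ≤ (∫ s in Ioc 0 δ, A * s ^ (ε - 1)) + ∫ s in Ioc δ b, M * s⁻¹ :=
        add_le_add (setIntegral_mono_on int_near int_rpow measurableSet_Ioc hrpow)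
          (setIntegral_mono_on int_far int_inv measurableSet_Ioc hinv)
    _ = A * (δ ^ ε / ε) + M * Real.log (b / δ) := by
        rw [setIntegral_const_mul_rpow_sub_one hε hδ.le, setIntegral_const_mul_inv hδ hδb]

lemma setIntegral_norm_le_add_mul_abs_log (hε : 0 < ε) (hT : 0 ≤ T) (hθ : 0 < θ) (hθ1 : θ ≤ 1)
    (hf : AEStronglyMeasurable f (volume.restrict (Ioc 0 1)))
    (hinv : ∀ s ∈ Ioc 0 1, ‖f s‖ ≤ M * s⁻¹)
    (hrpow : ∀ s ∈ Ioc 0 1, ‖f s‖ ≤ c * θ ^ (-T) * s ^ (ε - 1)) :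
    ∫ s in Ioc 0 1, ‖f s‖ ≤ c / ε + M * (T / ε) * |Real.log θ| := by
  set δ := θ ^ (T / ε) with hδ_def
  have hδ : 0 < δ := Real.rpow_pos_of_pos hθ _
  have hδ1 : δ ≤ 1 := Real.rpow_le_one hθ.le hθ1 (by positivity)
  have near_eq : c * θ ^ (-T) * (δ ^ ε / ε) = c / ε := by
    rw [hδ_def, ← Real.rpow_mul hθ.le, div_mul_cancel₀ _ hε.ne', Real.rpow_neg hθ.le]
    have := (Real.rpow_pos_of_pos hθ T).ne'
    field_simp
  have far_eq : M * Real.log (1 / δ) = M * (T / ε) * |Real.log θ| := by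
    rw [one_div, Real.log_inv, hδ_def, Real.log_rpow hθ,
      abs_of_nonpos (Real.log_nonpos hθ.le hθ1)]
    ring
  rw [← near_eq, ← far_eq]
  exact setIntegral_norm_le_of_le_rpow_of_le_inv hε hδ hδ1 hf
    (fun s hs ↦ hrpow s (Ioc_subset_Ioc_right hδ1 hs))
    (fun s hs ↦ hinv s (Ioc_subset_Ioc_left hδ.le hs))

end SingleVariable

lemma exists_le_mul_abs_log_of_le_mul_one_add_abs_log {F : ℝ → ℝ} {C : ℝ}
    (hF : ∀ θ, 0 < θ → θ ≤ 1 → F θ ≤ C * (1 + |Real.log θ|)) :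
    ∃ C' : ℝ, ∃ θ₀ ∈ Ioo (0 : ℝ) 1, ∀ θ, 0 < θ → θ < θ₀ → F θ ≤ C' * |Real.log θ| := by
  have exp_neg_one_lt_one : Real.exp (-1) < 1 := Real.exp_lt_one_iff.2 (by norm_num)
  refine ⟨|C| * 2, Real.exp (-1), ⟨Real.exp_pos _, exp_neg_one_lt_one⟩, fun θ hθ hlt ↦ ?_⟩
  have one_le_abs_log : 1 ≤ |Real.log θ| :=
    le_abs.2 (Or.inr (by linarith [(Real.log_lt_iff_lt_exp hθ).2 hlt]))
  calc F θ ≤ C * (1 + |Real.log θ|) := hF θ hθ (hlt.trans exp_neg_one_lt_one).le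
    _ ≤ |C| * (2 * |Real.log θ|) :=
        mul_le_mul (le_abs_self C) (by linarith) (by positivity) (abs_nonneg C)
    _ = |C| * 2 * |Real.log θ| := (mul_assoc _ _ _).symm

section TwoVariables

variable {E : Type*} [NormedAddCommGroup E] {σ : ℝ → ℝ → E} {φ : ℝ → ℝ} {ε T c : ℝ}

lemma exists_setIntegral_norm_le_mul_one_add_abs_log (hφ : BddAbove (φ '' Ioc 0 1)) (hε : 0 < ε)
    (hmeas : ∀ θ, 0 < θ → θ ≤ 1 →
      AEStronglyMeasurable (fun s ↦ σ (θ * s) s) (volume.restrict (Ioc 0 1)))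
    (h1 : ∀ x ζ : ℝ, 0 < x → x ≤ 1 → 0 < ζ → ζ ≤ 1 → ‖σ x ζ‖ ≤ φ x * ζ⁻¹)
    (h2 : ∀ θ s : ℝ, 0 < θ → θ ≤ 1 → 0 < s → s ≤ 1 →
      ‖σ (θ * s) s‖ ≤ c * θ ^ (-T) * s ^ (ε - 1)) :
    ∃ C : ℝ, ∀ θ : ℝ, 0 < θ → θ ≤ 1 →
      (∫ s in Ioc (0 : ℝ) 1, ‖σ (θ * s) s‖) ≤ C * (1 + |Real.log θ|) := by
  obtain ⟨M, hM⟩ := hφ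
  have hφM (x : ℝ) (hx : 0 < x) (hx1 : x ≤ 1) : φ x ≤ M := hM (mem_image_of_mem φ ⟨hx, hx1⟩)
  have hM0 : 0 ≤ M := by
    have hφ1 : 0 ≤ φ 1 := by
      simpa using (norm_nonneg _).trans (h1 1 1 one_pos le_rfl one_pos le_rfl)
    exact hφ1.trans (hφM 1 one_pos le_rfl)
  have hc : 0 ≤ c := by simpa using (norm_nonneg _).trans (h2 1 1 one_pos le_rfl one_pos le_rfl)
  refine ⟨c / ε + M * (|T| / ε), fun θ hθ hθ1 ↦ ?_⟩
  have hinv (s : ℝ) (hs : s ∈ Ioc 0 1) : ‖σ (θ * s) s‖ ≤ M * s⁻¹ := by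
    obtain ⟨hs0, hs1⟩ := hs
    have hθs : 0 < θ * s := mul_pos hθ hs0
    have hθs1 : θ * s ≤ 1 := mul_le_one₀ hθ1 hs0.le hs1
    exact (h1 _ s hθs hθs1 hs0 hs1).trans (by gcongr; exact hφM _ hθs hθs1)
  have hrpow (s : ℝ) (hs : s ∈ Ioc 0 1) : ‖σ (θ * s) s‖ ≤ c * θ ^ (-|T|) * s ^ (ε - 1) := by
    have hθT : θ ^ (-T) ≤ θ ^ (-|T|) :=
      Real.rpow_le_rpow_of_exponent_ge hθ hθ1 (neg_le_neg (le_abs_self T))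
    have hs0 : 0 ≤ s := hs.1.le
    exact (h2 θ s hθ hθ1 hs.1 hs.2).trans (by gcongr)
  have log_bound := setIntegral_norm_le_add_mul_abs_log hε (abs_nonneg T) hθ hθ1
    (hmeas θ hθ hθ1) hinv hrpow
  have near_nonneg : 0 ≤ c / ε * |Real.log θ| := by positivity
  have far_nonneg : 0 ≤ M * (|T| / ε) := by positivity
  linarith

theorem sal_supplement_general (hφ : BddAbove (φ '' Ioc 0 1)) (hε : 0 < ε)
    (hmeas : ∀ θ, 0 < θ → θ ≤ 1 →
      AEStronglyMeasurable (fun s ↦ σ (θ * s) s) (volume.restrict (Ioc 0 1)))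
    (h1 : ∀ x ζ : ℝ, 0 < x → x ≤ 1 → 0 < ζ → ζ ≤ 1 → ‖σ x ζ‖ ≤ φ x * ζ⁻¹)
    (h2 : ∀ θ s : ℝ, 0 < θ → θ ≤ 1 → 0 < s → s ≤ 1 →
      ‖σ (θ * s) s‖ ≤ c * θ ^ (-T) * s ^ (ε - 1)) :
    (∃ C : ℝ, ∀ θ : ℝ, 0 < θ → θ ≤ 1 →
      (∫ s in Ioc (0 : ℝ) 1, ‖σ (θ * s) s‖) ≤ C * (1 + |Real.log θ|)) ∧
    (∃ C' : ℝ, ∃ θ₀ ∈ Ioo (0 : ℝ) 1, ∀ θ : ℝ, 0 < θ → θ < θ₀ →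
      (∫ s in Ioc (0 : ℝ) 1, ‖σ (θ * s) s‖) ≤ C' * |Real.log θ|) := by
  obtain ⟨C, hC⟩ := exists_setIntegral_norm_le_mul_one_add_abs_log hφ hε hmeas h1 h2
  exact ⟨⟨C, hC⟩, exists_le_mul_abs_log_of_le_mul_one_add_abs_log hC⟩

end TwoVariables

/-- **Supplement to the Singular Asymptotics Lemma (real version).**
If `|σ(x,ζ)| ≤ φ(x) ζ⁻¹` on `(0,1] × (0,1]` with `φ` continuous on `[0,1]`, and
`|σ(θs, s)| ≤ c θ^{-T} s^{ε-1}` for `0 < θ ≤ 1`, `0 < s ≤ 1`, then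
`∫_0^1 |σ(θs, s)| ds ≤ C (1 + |log θ|)` for all `0 < θ ≤ 1`; in particular
`∫_0^1 |σ(θs, s)| ds = O(|log θ|)` as `θ → 0⁺`. -/
theorem sal_supplement (φ : ℝ → ℝ) (hφ : ContinuousOn φ (Icc 0 1))
    (ε T c : ℝ) (hε : 0 < ε) (hT : 0 < T) (hc : 0 < c)
    (σ : ℝ → ℝ → ℂ) (hmeas : Measurable (Function.uncurry σ))
    (h1 : ∀ x ζ : ℝ, 0 < x → x ≤ 1 → 0 < ζ → ζ ≤ 1 → ‖σ x ζ‖ ≤ φ x * ζ⁻¹)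
    (h2 : ∀ θ s : ℝ, 0 < θ → θ ≤ 1 → 0 < s → s ≤ 1 →
      ‖σ (θ * s) s‖ ≤ c * θ ^ (-T) * s ^ (ε - 1)) :
    (∃ C : ℝ, ∀ θ : ℝ, 0 < θ → θ ≤ 1 →
      (∫ s in Ioc (0:ℝ) 1, ‖σ (θ * s) s‖) ≤ C * (1 + |Real.log θ|)) ∧
    (∃ C' : ℝ, ∃ θ₀ ∈ Ioo (0:ℝ) 1, ∀ θ : ℝ, 0 < θ → θ < θ₀ →
      (∫ s in Ioc (0:ℝ) 1, ‖σ (θ * s) s‖) ≤ C' * |Real.log θ|) := by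
  have hφ_bdd := (isCompact_Icc.bddAbove_image hφ).mono (image_mono Ioc_subset_Icc_self)
  exact sal_supplement_general hφ_bdd hε (fun θ _ _ ↦
    (hmeas.comp ((measurable_const_mul θ).prodMk measurable_id)).aestronglyMeasurable) h1 h2
end

section
/- Let u be the restriction to [0,∞)² of a smooth compactly supported function on ℝ². Then the integral f_*u(t) = ∫_0^∞ u(x, t/x) (1/x) dx converges for every t > 0, and f_*u(t) + u(0,0) ln t remains bounded as t → 0⁺; i.e., there are C > 0 and t₀ ∈ (0,1) with |f_*u(t) + u(0,0) ln t| ≤ C for 0 < t < t₀. -/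
open MeasureTheory Set

/-!
Compact support confines the integral to `t / R ≤ x ≤ R`. There `∫ x⁻¹ = 2 log R - log t`, so
freezing `u` at the origin contributes `-log t • u 0` up to a constant. The error is controlled by
`‖u z - u 0‖ ≤ L ‖z‖ ^ α`: on the hyperbola `x * y = t` one has `‖(x, y)‖ ^ α ≤ x ^ α + y ^ α`, and
the two terms, exchanged by `x ↦ t / x`, each have integral at most `R ^ α / α` against `x⁻¹ dx`,
uniformly in `t`.
-/

open scoped Topology Asymptotics

section Growth

variable {V W : Type*} [SeminormedAddCommGroup V] [SeminormedAddCommGroup W]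

lemma norm_prodMk_rpow_le_add (v : V) (w : W) (α : ℝ) : ‖(v, w)‖ ^ α ≤ ‖v‖ ^ α + ‖w‖ ^ α := by
  have hv : 0 ≤ ‖v‖ ^ α := by positivity
  have hw : 0 ≤ ‖w‖ ^ α := by positivity
  rw [Prod.norm_mk]
  rcases max_choice ‖v‖ ‖w‖ with h | h <;> rw [h] <;> linarith

lemma exists_norm_le_mul_rpow_of_isBigO_of_bounded {f : V → W} {α M : ℝ} (hα : 0 ≤ α)
    (hf : f =O[𝓝 0] fun z => ‖z‖ ^ α) (hM : ∀ z, ‖f z‖ ≤ M) :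
    ∃ L, 0 ≤ L ∧ ∀ z, ‖f z‖ ≤ L * ‖z‖ ^ α := by
  obtain ⟨c, hc, hbound⟩ := hf.exists_nonneg
  obtain ⟨δ, hδ, hball⟩ := Metric.eventually_nhds_iff.1 hbound.bound
  refine ⟨max c (M / δ ^ α), le_max_of_le_left hc, fun z => ?_⟩
  rcases lt_or_ge ‖z‖ δ with hz | hz
  · calc ‖f z‖ ≤ c * ‖‖z‖ ^ α‖ := hball (by rwa [dist_zero_right])
      _ = c * ‖z‖ ^ α := by rw [Real.norm_of_nonneg (by positivity)]
      _ ≤ max c (M / δ ^ α) * ‖z‖ ^ α := by gcongr; exact le_max_left _ _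
  · have : 0 ≤ M := (norm_nonneg _).trans (hM z)
    calc ‖f z‖ ≤ M := hM z
      _ = M / δ ^ α * δ ^ α := by field_simp
      _ ≤ max c (M / δ ^ α) * ‖z‖ ^ α := by gcongr; exact le_max_right _ _

end Growth

section Hyperbola

variable {R t : ℝ}

lemma integral_inv_div_self (hR : 0 < R) (ht : 0 < t) :
    ∫ x in (t / R)..R, x⁻¹ = 2 * Real.log R - Real.log t := by
  rw [integral_inv_of_pos (div_pos ht hR) hR, Real.log_div hR.ne' (div_pos ht hR).ne',
    Real.log_div ht.ne' hR.ne']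
  ring

lemma zero_notMem_uIcc_div_self (hR : 0 < R) (ht : 0 < t) : (0 : ℝ) ∉ uIcc (t / R) R :=
  notMem_uIcc_of_lt (div_pos ht hR) hR

lemma intervalIntegrable_inv_mul_rpow_add_div_rpow (hR : 0 < R) (ht : 0 < t) (α : ℝ) :
    IntervalIntegrable (fun x => x⁻¹ * (x ^ α + (t / x) ^ α)) volume (t / R) R := by
  refine ContinuousOn.intervalIntegrable fun x hx => ContinuousAt.continuousWithinAt ?_
  have hx0 : x ≠ 0 := fun h => zero_notMem_uIcc_div_self hR ht (h ▸ hx)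
  have htx : t / x ≠ 0 := div_ne_zero ht.ne' hx0
  fun_prop (disch := tauto)

lemma integral_inv_mul_rpow_add_div_rpow (hR : 0 < R) (ht : 0 < t) {α : ℝ} (hα : α ≠ 0) :
    ∫ x in (t / R)..R, x⁻¹ * (x ^ α + (t / x) ^ α) = 2 * (R ^ α - (t / R) ^ α) / α := by
  have hderiv : ∀ x ∈ uIcc (t / R) R,
      HasDerivAt (fun x => (x ^ α - (t / x) ^ α) / α) (x⁻¹ * (x ^ α + (t / x) ^ α)) x := by
    intro x hx
    have hx0 : 0 < x := (lt_min (div_pos ht hR) hR).trans_le hx.1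
    have hdiv : HasDerivAt (fun x => t / x) (-t / x ^ 2) x := by
      simpa using (hasDerivAt_const x t).fun_div (hasDerivAt_id' x) hx0.ne'
    have hpow := (Real.hasDerivAt_rpow_const (p := α) (Or.inl hx0.ne')).sub
      (hdiv.rpow_const (p := α) (Or.inl (div_pos ht hx0).ne'))
    refine (hpow.div_const α).congr_deriv ?_
    rw [Real.rpow_sub_one hx0.ne', Real.rpow_sub_one (div_pos ht hx0).ne']
    field_simp
    ring
  rw [intervalIntegral.integral_eq_sub_of_hasDerivAt hderiv
    (intervalIntegrable_inv_mul_rpow_add_div_rpow hR ht α), div_div_cancel₀ ht.ne']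
  ring

lemma apply_div_eq_zero_of_notMem_Ioc {X : Type*} [Zero X] {u : ℝ × ℝ → X} {x : ℝ} (hR : 0 < R)
    (hu : ∀ z, R ≤ ‖z‖ → u z = 0) (hx : 0 < x) (hxR : x ∉ Ioc (t / R) R) : u (x, t / x) = 0 := by
  apply hu
  rcases lt_or_ge R x with hRx | hxR'
  · exact hRx.le.trans ((le_abs_self x).trans (norm_fst_le (x, t / x)))
  · have hxt : x ≤ t / R := not_lt.1 fun h => hxR ⟨h, hxR'⟩
    have hRt : R ≤ t / x := (le_div_comm₀ hx hR).1 hxt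
    exact hRt.trans ((le_abs_self _).trans (norm_snd_le (x, t / x)))

end Hyperbola

variable {E : Type*} [NormedAddCommGroup E] [NormedSpace ℝ E]

/-- The push-forward of the density `u dx dy` on the open quadrant under `(x, y) ↦ x * y`,
as a function of `t > 0`. Fibres `x * y = t` are parametrized by `x`, on which the density is
`x⁻¹ dx`; the value is `0` where the integral diverges. -/
noncomputable def mulPushforward (u : ℝ × ℝ → E) (t : ℝ) : E :=
  ∫ x in Ioi (0 : ℝ), x⁻¹ • u (x, t / x)

section Truncation

variable {u : ℝ × ℝ → E} {R t : ℝ}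

lemma continuousOn_inv_smul_apply_div (hu : Continuous u) (t : ℝ) :
    ContinuousOn (fun x : ℝ => x⁻¹ • u (x, t / x)) {0}ᶜ := by
  have hcurve : ContinuousOn (fun x : ℝ => (x, t / x)) {0}ᶜ :=
    continuousOn_id.prodMk (continuousOn_const.div continuousOn_id fun _ hx => hx)
  exact continuousOn_inv₀.smul (hu.comp_continuousOn hcurve)

lemma intervalIntegrable_inv_smul_apply_div (hu : Continuous u) (hR : 0 < R) (ht : 0 < t) :
    IntervalIntegrable (fun x : ℝ => x⁻¹ • u (x, t / x)) volume (t / R) R :=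
  ((continuousOn_inv_smul_apply_div hu t).mono
    (subset_compl_singleton_iff.2 (zero_notMem_uIcc_div_self hR ht))).intervalIntegrable

lemma integrableOn_inv_smul_apply_div (hu : Continuous u) (hsupp : HasCompactSupport u)
    (ht : 0 < t) : IntegrableOn (fun x : ℝ => x⁻¹ • u (x, t / x)) (Ioi 0) := by
  obtain ⟨R, hR, huR⟩ := hsupp.exists_pos_le_norm
  refine (intervalIntegrable_inv_smul_apply_div hu hR ht).1.of_forall_sdiff_eq_zero
    measurableSet_Ioi fun x hx => ?_
  rw [apply_div_eq_zero_of_notMem_Ioc hR huR hx.1 hx.2, smul_zero]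

lemma mulPushforward_eq_intervalIntegral (hR : 0 < R) (hu : ∀ z, R ≤ ‖z‖ → u z = 0)
    (ht : 0 < t) (htR : t / R ≤ R) :
    mulPushforward u t = ∫ x in (t / R)..R, x⁻¹ • u (x, t / x) := by
  have hsub : Ioc (t / R) R ⊆ Ioi 0 := fun x hx => (div_pos ht hR).trans hx.1
  rw [mulPushforward, intervalIntegral.integral_of_le htR]
  refine setIntegral_eq_of_subset_of_forall_sdiff_eq_zero measurableSet_Ioi hsub fun x hx => ?_
  rw [apply_div_eq_zero_of_notMem_Ioc hR hu hx.1 hx.2, smul_zero]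

end Truncation

lemma norm_integral_inv_smul_apply_div_le {w : ℝ × ℝ → E} {L R α t : ℝ} (hL : 0 ≤ L)
    (hα : 0 < α) (hw : ∀ z, ‖w z‖ ≤ L * ‖z‖ ^ α) (hR : 0 < R) (ht : 0 < t) (htR : t / R ≤ R) :
    ‖∫ x in (t / R)..R, x⁻¹ • w (x, t / x)‖ ≤ L * (2 * R ^ α / α) := by
  have hpointwise : ∀ x ∈ Ioc (t / R) R,
      ‖x⁻¹ • w (x, t / x)‖ ≤ L * (x⁻¹ * (x ^ α + (t / x) ^ α)) := by
    intro x hx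
    have hx0 : 0 < x := (div_pos ht hR).trans hx.1
    calc ‖x⁻¹ • w (x, t / x)‖ = x⁻¹ * ‖w (x, t / x)‖ := by
          rw [norm_smul, Real.norm_of_nonneg (inv_nonneg.2 hx0.le)]
      _ ≤ x⁻¹ * (L * (x ^ α + (t / x) ^ α)) := by
          gcongr
          calc ‖w (x, t / x)‖ ≤ L * ‖(x, t / x)‖ ^ α := hw _
            _ ≤ L * (‖x‖ ^ α + ‖t / x‖ ^ α) := by gcongr; exact norm_prodMk_rpow_le_add ..
            _ = L * (x ^ α + (t / x) ^ α) := by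
                rw [Real.norm_of_nonneg hx0.le, Real.norm_of_nonneg (div_pos ht hx0).le]
      _ = L * (x⁻¹ * (x ^ α + (t / x) ^ α)) := by ring
  calc ‖∫ x in (t / R)..R, x⁻¹ • w (x, t / x)‖
      ≤ ∫ x in (t / R)..R, L * (x⁻¹ * (x ^ α + (t / x) ^ α)) :=
        intervalIntegral.norm_integral_le_of_norm_le htR (.of_forall hpointwise)
          ((intervalIntegrable_inv_mul_rpow_add_div_rpow hR ht α).const_mul L)
    _ = L * (2 * (R ^ α - (t / R) ^ α) / α) := by
        rw [intervalIntegral.integral_const_mul, integral_inv_mul_rpow_add_div_rpow hR ht hα.ne']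
    _ ≤ L * (2 * R ^ α / α) := by
        gcongr
        exact sub_le_self _ (by positivity)

lemma mulPushforward_add_log_smul [CompleteSpace E] {u : ℝ × ℝ → E} {R t : ℝ}
    (hu : Continuous u) (hR : 0 < R) (huR : ∀ z, R ≤ ‖z‖ → u z = 0) (ht : 0 < t)
    (htR : t / R ≤ R) :
    mulPushforward u t + Real.log t • u 0 =
      (∫ x in (t / R)..R, x⁻¹ • (u (x, t / x) - u 0)) + (2 * Real.log R) • u 0 := by
  have hconst : IntervalIntegrable (fun x : ℝ => x⁻¹ • u 0) volume (t / R) R :=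
    intervalIntegrable_inv_smul_apply_div (u := fun _ => u 0) continuous_const hR ht
  simp_rw [smul_sub]
  rw [mulPushforward_eq_intervalIntegral hR huR ht htR, intervalIntegral.integral_sub
    (intervalIntegrable_inv_smul_apply_div hu hR ht) hconst,
    intervalIntegral.integral_smul_const, integral_inv_div_self hR ht]
  module

lemma exists_norm_mulPushforward_add_log_smul_le [CompleteSpace E] {u : ℝ × ℝ → E} {α : ℝ}
    (hu : Continuous u) (hsupp : HasCompactSupport u) (hα : 0 < α)
    (hu0 : (fun z => u z - u 0) =O[𝓝 0] fun z => ‖z‖ ^ α) :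
    ∃ C > 0, ∀ t ∈ Ioo (0 : ℝ) 1, ‖mulPushforward u t + Real.log t • u 0‖ ≤ C := by
  obtain ⟨M, hM⟩ := hsupp.exists_bound_of_continuous hu
  obtain ⟨L, hL, huL⟩ := exists_norm_le_mul_rpow_of_isBigO_of_bounded hα.le hu0
    fun z => (norm_sub_le _ _).trans (add_le_add (hM z) (hM 0))
  obtain ⟨R₀, -, huR₀⟩ := hsupp.exists_pos_le_norm
  obtain ⟨R, hR₀, hR1⟩ : ∃ R, R₀ ≤ R ∧ 1 ≤ R := ⟨max R₀ 1, le_max_left _ _, le_max_right _ _⟩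
  have hR : 0 < R := one_pos.trans_le hR1
  have huR : ∀ z, R ≤ ‖z‖ → u z = 0 := fun z hz => huR₀ z (hR₀.trans hz)
  refine ⟨L * (2 * R ^ α / α) + ‖(2 * Real.log R) • u 0‖ + 1, by positivity, fun t ht => ?_⟩
  have htR : t / R ≤ R := (div_le_self ht.1.le hR1).trans (ht.2.le.trans hR1)
  rw [mulPushforward_add_log_smul hu hR huR ht.1 htR]
  calc _ ≤ _ := norm_add_le _ _
    _ ≤ L * (2 * R ^ α / α) + ‖(2 * Real.log R) • u 0‖ := by
        gcongr
        exact norm_integral_inv_smul_apply_div_le hL hα huL hR ht.1 htR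
    _ ≤ _ := le_add_of_nonneg_right zero_le_one

theorem pushforward_smooth_log_bounded_general [CompleteSpace E] (u : ℝ × ℝ → E) (α : ℝ)
    (hα : 0 < α) (hu : Continuous u) (hsupp : HasCompactSupport u)
    (hu0 : (fun z => u z - u 0) =O[𝓝 0] fun z => ‖z‖ ^ α) :
    (∀ t : ℝ, 0 < t → IntegrableOn (fun x : ℝ => x⁻¹ • u (x, t / x)) (Ioi 0)) ∧
    ∃ C > 0, ∀ t ∈ Ioo (0 : ℝ) 1, ‖mulPushforward u t + Real.log t • u 0‖ ≤ C :=
  ⟨fun _ ht => integrableOn_inv_smul_apply_div hu hsupp ht,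
    exists_norm_mulPushforward_add_log_smul_le hu hsupp hα hu0⟩

/-- **Push-forward of a smooth compactly supported density under `f(x,y) = xy`.**
For `u` (the restriction to `[0,∞)²` of) a smooth compactly supported function on
`ℝ²`, the push-forward `(f_* u)(t) = ∫_0^∞ u(x, t/x) (1/x) dx` converges for every
`t > 0`, and `(f_* u)(t) + u(0,0) log t` stays bounded as `t → 0⁺`. -/
theorem pushforward_smooth_log_bounded (u : ℝ → ℝ → ℂ)
    (hu : ContDiff ℝ (⊤ : ℕ∞) (Function.uncurry u))
    (hsupp : HasCompactSupport (Function.uncurry u)) :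
    (∀ t : ℝ, 0 < t → IntegrableOn (fun x => u x (t / x) * (1 / (x : ℂ))) (Ioi 0)) ∧
    ∃ C > 0, ∃ t₀ ∈ Ioo (0:ℝ) 1, ∀ t : ℝ, 0 < t → t < t₀ →
      ‖(∫ x in Ioi (0:ℝ), u x (t / x) * (1 / (x : ℂ))) + u 0 0 * (Real.log t : ℂ)‖ ≤ C := by
  obtain ⟨hint, C, hC, hbound⟩ := pushforward_smooth_log_bounded_general _ 1 one_pos hu.continuous
    hsupp (by simpa using (hu.differentiable (by simp) 0).isBigO_sub.norm_right)
  simp only [mul_comm (u _ _), one_div, ← Complex.ofReal_inv, ← Complex.real_smul]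
  exact ⟨hint, C, hC, 1 / 2, by norm_num, fun t ht ht₀ => hbound t ⟨ht, by linarith⟩⟩
end

section
/- Let K ⊂ ℂ × ℕ₀ be a finite set of pairs (α,k), all distinct. Let v: (0,1] × [0,1] → ℂ be such that for every p ∈ ℕ₀ the partial derivative ∂_t^p v(ζ,t) (in the second variable) exists and is continuous, and suppose there are δ > 0, constants C_p, and continuous functions w_{α,k,p}: [0,1] → ℂ for (α,k) ∈ K such that | ∂_t^p v(ζ,t) − Σ_{(α,k) ∈ K} ζ^{α} (ln ζ)^k w_{α,k,p}(t) | ≤ C_p ζ^{δ} for all ζ ∈ (0,1], t ∈ [0,1], p ∈ ℕ₀. Then the following are equivalent: (i) for every p ∈ ℕ₀ there is a constant C'_p with ∫_0^1 |∂_t^p v(ζ,t)| (1/ζ) dζ ≤ C'_p for all t ∈ [0,1]; (ii) every (α,k) ∈ K for which w_{α,k,p} is not identically zero for some p satisfies Re α > 0. -/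
open MeasureTheory Set

/-!
In the coordinate `x = -log ζ` the measure `dζ/ζ` on `(0, 1]` becomes `dx` on `[0, ∞)`, the
monomial `ζ ^ α * (log ζ) ^ k` becomes `exp (-α x) * (-x) ^ k`, and the remainder `O(ζ ^ δ)` is
integrable. So only the finite sum of monomials matters, and it is integrable when all exponents
have positive real part. Conversely, let `(α, k)` be a leading index (smallest `Re α`, then largest
`k`) with nonzero coefficient, and suppose `Re α ≤ 0`. Divide an integrable sum by the leading
monomial, whose inverse is bounded for `x ≥ 1`: the quotient is still integrable, so its mean over
`[1, X]` tends to `0`. But in the quotient every term other than the leading one either decays or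
is a pure oscillation `exp (iθx)`, so the mean tends to the leading coefficient.
-/

open Filter Topology

variable {E : Type*} [NormedAddCommGroup E]

section Mean

variable [NormedSpace ℝ E]

/-- `h` has asymptotic mean value `m`, as in the theory of almost periodic functions. The averages
start at `1` because the quotients of monomials below are singular at `0`; integrability is part of
the definition, so that the junk value `0` of a divergent integral never counts as a mean. -/
def HasMean (h : ℝ → E) (m : E) : Prop :=
  (∀ X, 1 ≤ X → IntervalIntegrable h volume 1 X) ∧
    Tendsto (fun X : ℝ => X⁻¹ • ∫ x in (1 : ℝ)..X, h x) atTop (𝓝 m)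

namespace HasMean

lemma unique {h : ℝ → E} {m m' : E} (hm : HasMean h m) (hm' : HasMean h m') : m = m' :=
  tendsto_nhds_unique hm.2 hm'.2

lemma congr {f g : ℝ → E} {m : E} (hf : HasMean f m) (hfg : EqOn f g (Ici 1)) : HasMean g m := by
  have hfg_uIcc {X : ℝ} (hX : 1 ≤ X) : EqOn f g (uIcc 1 X) :=
    hfg.mono (uIcc_of_le hX ▸ Icc_subset_Ici_self)
  refine ⟨fun X hX => (hf.1 X hX).congr ((hfg_uIcc hX).mono uIoc_subset_uIcc), hf.2.congr' ?_⟩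
  filter_upwards [eventually_ge_atTop 1] with X hX
  rw [intervalIntegral.integral_congr (hfg_uIcc hX)]

lemma sum {ι : Type*} {s : Finset ι} {f : ι → ℝ → E} {m : ι → E}
    (hf : ∀ i ∈ s, HasMean (f i) (m i)) :
    HasMean (fun x => ∑ i ∈ s, f i x) (∑ i ∈ s, m i) := by
  refine ⟨fun X hX => ?_, (tendsto_finsetSum s fun i hi => (hf i hi).2).congr' ?_⟩
  · exact (IntervalIntegrable.sum s fun i hi => (hf i hi).1 X hX).congr fun x _ => by simp
  · filter_upwards [eventually_ge_atTop 1] with X hX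
    rw [intervalIntegral.integral_finsetSum fun i hi => (hf i hi).1 X hX, Finset.smul_sum]

lemma const [CompleteSpace E] (c : E) : HasMean (fun _ => c) c := by
  refine ⟨fun X _ => intervalIntegrable_const, ?_⟩
  have hratio : Tendsto (fun X : ℝ => 1 - X⁻¹) atTop (𝓝 1) := by
    simpa using tendsto_inv_atTop_zero.const_sub (1 : ℝ)
  refine (by simpa using hratio.smul_const c : Tendsto _ _ (𝓝 c)).congr' ?_
  filter_upwards [eventually_gt_atTop 0] with X hX
  rw [intervalIntegral.integral_const, smul_smul, mul_sub, inv_mul_cancel₀ hX.ne', mul_one]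

lemma zero_of_norm_integral_le {h : ℝ → E} (hint : ∀ X, 1 ≤ X → IntervalIntegrable h volume 1 X)
    {M : ℝ} (hM : ∀ X, 1 ≤ X → ‖∫ x in (1 : ℝ)..X, h x‖ ≤ M) : HasMean h 0 := by
  refine ⟨hint, squeeze_zero_norm' ?_ (by simpa using tendsto_inv_atTop_zero.mul_const M)⟩
  filter_upwards [eventually_ge_atTop 1] with X hX
  rw [norm_smul, Real.norm_of_nonneg (inv_nonneg.2 (zero_le_one.trans hX))]
  exact mul_le_mul_of_nonneg_left (hM X hX) (inv_nonneg.2 (zero_le_one.trans hX))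

lemma zero_of_integrableOn {h : ℝ → E} (hh : IntegrableOn h (Ioi 1)) : HasMean h 0 := by
  refine zero_of_norm_integral_le (M := ∫ x in Ioi 1, ‖h x‖)
    (fun X hX => (intervalIntegrable_iff_integrableOn_Ioc_of_le hX).2
      (hh.mono_set Ioc_subset_Ioi_self)) fun X hX => ?_
  rw [intervalIntegral.integral_of_le hX]
  exact (norm_integral_le_integral_norm _).trans <| setIntegral_mono_set hh.norm
    (ae_of_all _ fun _ => norm_nonneg _) Ioc_subset_Ioi_self.eventuallyLE

lemma zero_of_tendsto {h : ℝ → E} (hint : ∀ X, 1 ≤ X → IntervalIntegrable h volume 1 X)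
    (hh : Tendsto h atTop (𝓝 0)) : HasMean h 0 := by
  refine ⟨hint, NormedAddGroup.tendsto_nhds_zero.2 fun ε hε => ?_⟩
  obtain ⟨A, hA1, hA⟩ : ∃ A, 1 ≤ A ∧ ∀ x, A ≤ x → ‖h x‖ ≤ ε / 2 := by
    obtain ⟨A, hA⟩ := eventually_atTop.1
      ((NormedAddGroup.tendsto_nhds_zero.1 hh (ε / 2) (half_pos hε)).and (eventually_ge_atTop 1))
    exact ⟨A, (hA A le_rfl).2, fun x hx => (hA x hx).1.le⟩
  set M := ‖∫ x in (1 : ℝ)..A, h x‖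
  have hinitial : ∀ᶠ X : ℝ in atTop, X⁻¹ * M < ε / 2 :=
    (by simpa using tendsto_inv_atTop_zero.mul_const M : Tendsto (fun X : ℝ => X⁻¹ * M) atTop (𝓝 0))
      |>.eventually_lt_const (half_pos hε)
  filter_upwards [eventually_ge_atTop A, hinitial] with X hX hinitial
  have hX0 : 0 < X := zero_lt_one.trans_le (hA1.trans hX)
  have htail : ‖∫ x in A..X, h x‖ ≤ ε / 2 * X := by
    refine (intervalIntegral.norm_integral_le_of_norm_le_const fun x hx =>
      hA x (uIoc_of_le hX ▸ hx).1.le).trans ?_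
    rw [abs_of_nonneg (sub_nonneg.2 hX)]
    gcongr
    linarith
  rw [← intervalIntegral.integral_add_adjacent_intervals (hint A hA1)
    ((hint A hA1).symm.trans (hint X (hA1.trans hX))), norm_smul, norm_inv,
    Real.norm_of_nonneg hX0.le]
  calc X⁻¹ * ‖(∫ x in (1 : ℝ)..A, h x) + ∫ x in A..X, h x‖
      ≤ X⁻¹ * (M + ε / 2 * X) := by gcongr; exact (norm_add_le _ _).trans (by gcongr)
    _ = X⁻¹ * M + ε / 2 := by field_simp
    _ < ε := by linarith

lemma smul_const {F : Type*} [NormedAddCommGroup F] [NormedSpace ℂ F] [CompleteSpace F]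
    {f : ℝ → ℂ} {m : ℂ} (hf : HasMean f m) (c : F) :
    HasMean (fun x => f x • c) (m • c) := by
  refine ⟨fun X hX => ⟨(hf.1 X hX).1.smul_const c, (hf.1 X hX).2.smul_const c⟩, ?_⟩
  simpa only [intervalIntegral.integral_smul_const, smul_assoc] using hf.2.smul_const c

lemma zero_cexp_mul {b : ℂ} (hb : b ≠ 0) (hre : b.re = 0) :
    HasMean (fun x : ℝ => Complex.exp (b * x)) 0 := by
  refine zero_of_norm_integral_le (M := 2 / ‖b‖)
    (fun X _ => Continuous.intervalIntegrable (by fun_prop) 1 X) fun X _ => ?_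
  have norm_exp (x : ℝ) : ‖Complex.exp (b * x)‖ = 1 := by simp [Complex.norm_exp, hre]
  rw [integral_exp_mul_complex hb, norm_div]
  gcongr
  calc ‖Complex.exp (b * X) - Complex.exp (b * (1 : ℝ))‖
      ≤ ‖Complex.exp (b * X)‖ + ‖Complex.exp (b * (1 : ℝ))‖ := norm_sub_le _ _
    _ = 2 := by rw [norm_exp, norm_exp]; norm_num

end HasMean

end Mean

/-- The monomial `ζ ^ α * (log ζ) ^ k` of index `a = (α, k)` in a polyhomogeneous expansion at
`ζ = 0`. -/
noncomputable def logMonomial (a : ℂ × ℕ) (ζ : ℝ) : ℂ :=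
  (ζ : ℂ) ^ a.1 * ((Real.log ζ : ℝ) : ℂ) ^ a.2

lemma norm_logMonomial (a : ℂ × ℕ) {ζ : ℝ} (hζ : 0 < ζ) :
    ‖logMonomial a ζ‖ = ζ ^ a.1.re * |Real.log ζ| ^ a.2 := by
  rw [logMonomial, norm_mul, norm_pow, Complex.norm_cpow_eq_rpow_re_of_pos hζ, Complex.norm_real,
    Real.norm_eq_abs]

lemma logMonomial_exp_neg (a : ℂ × ℕ) (x : ℝ) :
    logMonomial a (Real.exp (-x)) = Complex.exp (-(a.1 * x)) * (-(x : ℂ)) ^ a.2 := by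
  rw [logMonomial, Complex.cpow_def_of_ne_zero (by exact_mod_cast (Real.exp_pos _).ne'),
    ← Complex.ofReal_log (Real.exp_pos _).le, Real.log_exp]
  congr 2 <;> push_cast <;> ring

lemma norm_logMonomial_exp_neg (a : ℂ × ℕ) {x : ℝ} (hx : 0 ≤ x) :
    ‖logMonomial a (Real.exp (-x))‖ = Real.exp (-(a.1.re * x)) * x ^ a.2 := by
  rw [norm_logMonomial a (Real.exp_pos _), ← Real.exp_mul, Real.log_exp, abs_neg, abs_of_nonneg hx]
  congr 2
  ring

lemma continuous_logMonomial_exp_neg (a : ℂ × ℕ) :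
    Continuous fun x : ℝ => logMonomial a (Real.exp (-x)) := by
  simp only [logMonomial_exp_neg]
  fun_prop

lemma logMonomial_exp_neg_ne_zero (a : ℂ × ℕ) {x : ℝ} (hx : 0 < x) :
    logMonomial a (Real.exp (-x)) ≠ 0 := by
  rw [← norm_pos_iff, norm_logMonomial_exp_neg a hx.le]
  positivity

lemma continuousOn_logMonomial (a : ℂ × ℕ) : ContinuousOn (logMonomial a) (Ioi 0) := by
  intro ζ hζ
  have hζ0 : ζ ≠ 0 := (mem_Ioi.1 hζ).ne'
  refine ContinuousAt.continuousWithinAt (.mul ?_ ?_)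
  · exact Complex.continuousAt_ofReal_cpow_const ζ a.1 (.inr hζ0)
  · exact (Complex.continuous_ofReal.continuousAt.comp (Real.continuousAt_log hζ0)).pow _

lemma integrableOn_inv_smul_Ioc_iff_comp_exp_neg [NormedSpace ℝ E] (f : ℝ → E) :
    IntegrableOn (fun ζ : ℝ => ζ⁻¹ • f ζ) (Ioc 0 1) ↔
      IntegrableOn (fun x => f (Real.exp (-x))) (Ioi 0) := by
  have himage : (fun x : ℝ => Real.exp (-x)) '' Ici 0 = Ioc 0 1 := by
    ext ζ
    constructor
    · rintro ⟨x, hx, rfl⟩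
      exact ⟨Real.exp_pos _, Real.exp_le_one_iff.2 (neg_nonpos.2 hx)⟩
    · rintro ⟨hζ0, hζ1⟩
      exact ⟨-Real.log ζ, neg_nonneg.2 (Real.log_nonpos hζ0.le hζ1), by simp [Real.exp_log hζ0]⟩
  have hderiv (x : ℝ) : HasDerivAt (fun x => Real.exp (-x)) (-Real.exp (-x)) x := by
    simpa using (hasDerivAt_neg x).exp
  rw [← himage, integrableOn_image_iff_integrableOn_abs_deriv_smul measurableSet_Ici
    (fun x _ => (hderiv x).hasDerivWithinAt) (fun x _ y _ hxy => by simpa using hxy),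
    ← integrableOn_Ici_iff_integrableOn_Ioi]
  simp only [abs_neg, Real.abs_exp, smul_inv_smul₀ (Real.exp_ne_zero _)]

lemma integrableOn_inv_mul_norm_logMonomial {a : ℂ × ℕ} (ha : 0 < a.1.re) :
    IntegrableOn (fun ζ : ℝ => ζ⁻¹ * ‖logMonomial a ζ‖) (Ioc 0 1) := by
  have hgamma : IntegrableOn (fun x : ℝ => x ^ (a.2 : ℝ) * Real.exp (-a.1.re * x ^ (1 : ℝ)))
      (Ioi 0) :=
    integrableOn_rpow_mul_exp_neg_mul_rpow (neg_one_lt_zero.trans_le a.2.cast_nonneg) one_pos ha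
  refine (integrableOn_inv_smul_Ioc_iff_comp_exp_neg (fun ζ => ‖logMonomial a ζ‖)).2
    (hgamma.congr_fun (fun x hx => ?_) measurableSet_Ioi)
  simp only [norm_logMonomial_exp_neg a (mem_Ioi.1 hx).le, Real.rpow_natCast, Real.rpow_one,
    neg_mul, mul_comm (x ^ a.2)]

lemma integrableOn_inv_mul_const_mul_rpow {δ : ℝ} (hδ : 0 < δ) (C : ℝ) :
    IntegrableOn (fun ζ : ℝ => ζ⁻¹ * (C * ζ ^ δ)) (Ioc 0 1) := by
  have hrpow : IntegrableOn (fun ζ : ℝ => ζ ^ (δ - 1)) (Ioc 0 1) :=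
    (intervalIntegrable_iff_integrableOn_Ioc_of_le zero_le_one).1
      (intervalIntegral.intervalIntegrable_rpow' (by linarith))
  refine IntegrableOn.congr_fun (hrpow.const_mul C) (fun ζ hζ => ?_) measurableSet_Ioc
  simp only [Real.rpow_sub_one hζ.1.ne']
  ring

/-- The monomial of index `l` grows at least as fast as that of index `a` as `ζ → 0`. Only the
real parts of the exponents enter, so distinct indices may dominate each other. -/
def DominatesAtZero (l a : ℂ × ℕ) : Prop :=
  l.1.re < a.1.re ∨ l.1.re = a.1.re ∧ a.2 ≤ l.2

lemma exists_dominatesAtZero {s : Finset (ℂ × ℕ)} (hs : s.Nonempty) :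
    ∃ l ∈ s, ∀ a ∈ s, DominatesAtZero l a := by
  obtain ⟨l, hl, hmax⟩ := s.exists_max_image (fun a => toLex (-a.1.re, a.2)) hs
  refine ⟨l, hl, fun a ha => ?_⟩
  simpa [Prod.Lex.toLex_le_toLex, DominatesAtZero, eq_comm] using hmax a ha

lemma tendsto_exp_neg_mul_pow_div_pow {c : ℝ} {k m : ℕ} (h : 0 < c ∨ c = 0 ∧ k < m) :
    Tendsto (fun x : ℝ => Real.exp (-(c * x)) * x ^ k / x ^ m) atTop (𝓝 0) := by
  rcases h with hc | ⟨rfl, hkm⟩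
  · refine (tendsto_rpow_mul_exp_neg_mul_atTop_nhds_zero ((k : ℝ) - m) c hc).congr' ?_
    filter_upwards [eventually_gt_atTop 0] with x hx
    rw [Real.rpow_sub hx, Real.rpow_natCast, Real.rpow_natCast, neg_mul]
    ring
  · simpa using tendsto_pow_div_pow_atTop_zero (𝕜 := ℝ) hkm

lemma hasMean_zero_logMonomial_quotient {l a : ℂ × ℕ} (hla : DominatesAtZero l a) (hne : a ≠ l) :
    HasMean (fun x => (logMonomial l (Real.exp (-x)))⁻¹ * logMonomial a (Real.exp (-x))) 0 := by
  by_cases hosc : a.1.re = l.1.re ∧ a.2 = l.2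
  · have hb : l.1 - a.1 ≠ 0 := fun h => hne (Prod.ext (sub_eq_zero.1 h).symm hosc.2)
    refine (HasMean.zero_cexp_mul hb (by simp [hosc.1])).congr fun x hx => ?_
    have hx0 : (-(x : ℂ)) ^ l.2 ≠ 0 :=
      pow_ne_zero _ (neg_ne_zero.2 (by exact_mod_cast (zero_lt_one.trans_le hx).ne'))
    simp only [logMonomial_exp_neg, hosc.2]
    rw [mul_inv, mul_mul_mul_comm, inv_mul_cancel₀ hx0, ← Complex.exp_neg, ← Complex.exp_add]
    ring_nf
  · refine HasMean.zero_of_tendsto ?_ (tendsto_zero_iff_norm_tendsto_zero.2 ?_)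
    · refine fun X hX => ContinuousOn.intervalIntegrable fun x hx => ?_
      have hx0 : 0 < x := zero_lt_one.trans_le (uIcc_of_le hX ▸ hx).1
      exact (((continuous_logMonomial_exp_neg l).continuousAt.inv₀
        (logMonomial_exp_neg_ne_zero l hx0)).mul
        (continuous_logMonomial_exp_neg a).continuousAt).continuousWithinAt
    · have hdecay : 0 < a.1.re - l.1.re ∨ a.1.re - l.1.re = 0 ∧ a.2 < l.2 := by
        unfold DominatesAtZero at hla
        grind
      refine (tendsto_exp_neg_mul_pow_div_pow hdecay).congr' ?_
      filter_upwards [eventually_ge_atTop 0] with x hx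
      rw [norm_mul, norm_inv, norm_logMonomial_exp_neg _ hx, norm_logMonomial_exp_neg _ hx,
        mul_inv, ← Real.exp_neg, neg_neg, sub_mul, neg_sub, sub_eq_add_neg, Real.exp_add]
      ring

lemma norm_inv_logMonomial_exp_neg_le_one {l : ℂ × ℕ} (hl : l.1.re ≤ 0) {x : ℝ} (hx : 1 ≤ x) :
    ‖(logMonomial l (Real.exp (-x)))⁻¹‖ ≤ 1 := by
  have hx0 : 0 ≤ x := zero_le_one.trans hx
  rw [norm_inv, norm_logMonomial_exp_neg l hx0]
  have hexp : 1 ≤ Real.exp (-(l.1.re * x)) :=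
    Real.one_le_exp (neg_nonneg.2 (mul_nonpos_of_nonpos_of_nonneg hl hx0))
  exact inv_le_one_of_one_le₀ (one_le_mul_of_one_le_of_one_le hexp (one_le_pow₀ hx))

lemma leading_coeff_eq_zero_of_integrableOn [NormedSpace ℂ E] [CompleteSpace E]
    {s : Finset (ℂ × ℕ)} {w : ℂ × ℕ → E} {l : ℂ × ℕ} (hl : l ∈ s)
    (hdom : ∀ a ∈ s, DominatesAtZero l a) (hre : l.1.re ≤ 0)
    (hint : IntegrableOn (fun x => ∑ a ∈ s, logMonomial a (Real.exp (-x)) • w a) (Ioi 1)) :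
    w l = 0 := by
  set q : ℝ → ℂ := fun x => (logMonomial l (Real.exp (-x)))⁻¹ with hq
  have hmean_zero : HasMean (fun x => q x • ∑ a ∈ s, logMonomial a (Real.exp (-x)) • w a) 0 := by
    refine HasMean.zero_of_integrableOn (Integrable.bdd_smul (C := 1) hint ?_ ?_)
    · exact (continuous_logMonomial_exp_neg l).measurable.inv.aestronglyMeasurable
    · filter_upwards [ae_restrict_mem measurableSet_Ioi] with x hx
      exact norm_inv_logMonomial_exp_neg_le_one hre (mem_Ioi.1 hx).le
  have hmean_term : ∀ a ∈ s, HasMean (fun x => (q x * logMonomial a (Real.exp (-x))) • w a)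
      (if a = l then w l else 0) := by
    intro a ha
    split_ifs with hal
    · subst hal
      refine (HasMean.const (w a)).congr fun x hx => ?_
      simp only [hq, inv_mul_cancel₀
        (logMonomial_exp_neg_ne_zero a (zero_lt_one.trans_le hx)), one_smul]
    · simpa using (hasMean_zero_logMonomial_quotient (hdom a ha) hal).smul_const (w a)
  have hmean_sum := HasMean.sum hmean_term
  simp only [Finset.sum_ite_eq', hl, if_true, mul_smul, ← Finset.smul_sum] at hmean_sum
  exact hmean_sum.unique hmean_zero

lemma re_pos_of_integrableOn_sum_logMonomial [NormedSpace ℂ E] [CompleteSpace E]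
    {K : Finset (ℂ × ℕ)} {w : ℂ × ℕ → E}
    (hint : IntegrableOn (fun ζ : ℝ => ζ⁻¹ • ∑ a ∈ K, logMonomial a ζ • w a) (Ioc 0 1))
    {a : ℂ × ℕ} (ha : a ∈ K) (hwa : w a ≠ 0) : 0 < a.1.re := by
  classical
  rw [integrableOn_inv_smul_Ioc_iff_comp_exp_neg] at hint
  obtain ⟨l, hl, hdom⟩ := exists_dominatesAtZero (s := {b ∈ K | w b ≠ 0})
    ⟨a, Finset.mem_filter.2 ⟨ha, hwa⟩⟩
  have hla : l.1.re ≤ a.1.re :=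
    (hdom a (Finset.mem_filter.2 ⟨ha, hwa⟩)).elim le_of_lt fun h => h.1.le
  refine (lt_of_not_ge fun hre => (Finset.mem_filter.1 hl).2 ?_).trans_le hla
  refine leading_coeff_eq_zero_of_integrableOn hl hdom hre ?_
  refine (hint.mono_set (Ioi_subset_Ioi zero_le_one)).congr_fun (fun x _ => ?_) measurableSet_Ioi
  exact (Finset.sum_filter_of_ne fun b _ hb => right_ne_zero_of_smul hb).symm

lemma integrableOn_inv_smul_of_norm_sub_le [NormedSpace ℝ E] {f g : ℝ → E} {r : ℝ → ℝ}
    (hf : ∫⁻ ζ in Ioc (0 : ℝ) 1, ENNReal.ofReal (‖f ζ‖ / ζ) ≠ ⊤)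
    (hg : ContinuousOn g (Ioc 0 1)) (hr : IntegrableOn (fun ζ => ζ⁻¹ * r ζ) (Ioc 0 1))
    (hfg : ∀ ζ ∈ Ioc (0 : ℝ) 1, ‖f ζ - g ζ‖ ≤ r ζ) :
    IntegrableOn (fun ζ => ζ⁻¹ • g ζ) (Ioc 0 1) := by
  have hmeas : AEStronglyMeasurable (fun ζ => ζ⁻¹ • g ζ) (volume.restrict (Ioc 0 1)) :=
    ((continuousOn_inv₀.mono fun ζ hζ => hζ.1.ne').smul hg).aestronglyMeasurable measurableSet_Ioc
  have hle : ∀ ζ ∈ Ioc (0 : ℝ) 1,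
      ‖ζ⁻¹ • g ζ‖ₑ ≤ ENNReal.ofReal (‖f ζ‖ / ζ) + ‖ζ⁻¹ * r ζ‖ₑ := by
    intro ζ hζ
    have hζ' : 0 ≤ ζ⁻¹ := inv_nonneg.2 hζ.1.le
    have hr0 : 0 ≤ r ζ := (norm_nonneg _).trans (hfg ζ hζ)
    rw [Real.enorm_of_nonneg (mul_nonneg hζ' hr0), ← ofReal_norm,
      ← ENNReal.ofReal_add (div_nonneg (norm_nonneg _) hζ.1.le) (mul_nonneg hζ' hr0)]
    refine ENNReal.ofReal_le_ofReal ?_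
    rw [norm_smul, Real.norm_of_nonneg hζ', div_eq_inv_mul, ← mul_add]
    gcongr
    exact (norm_le_norm_add_norm_sub _ _).trans (by gcongr; exact hfg ζ hζ)
  refine ⟨hmeas, (setLIntegral_mono' measurableSet_Ioc hle).trans_lt ?_⟩
  rw [lintegral_add_right' _ hr.1.enorm]
  exact ENNReal.add_lt_top.2 ⟨hf.lt_top, hr.2⟩

lemma exists_lintegral_le_of_norm_le {T : Type*} {s : Set T} {u : ℝ → T → E} {G : ℝ → ℝ}
    (hG : IntegrableOn (fun ζ => ζ⁻¹ * G ζ) (Ioc 0 1))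
    (hu : ∀ ζ ∈ Ioc (0 : ℝ) 1, ∀ t ∈ s, ‖u ζ t‖ ≤ G ζ) :
    ∃ C' : ℝ, ∀ t ∈ s,
      ∫⁻ ζ in Ioc (0 : ℝ) 1, ENNReal.ofReal (‖u ζ t‖ / ζ) ≤ ENNReal.ofReal C' := by
  refine ⟨∫ ζ in Ioc (0 : ℝ) 1, ‖ζ⁻¹ * G ζ‖, fun t ht => ?_⟩
  rw [ofReal_integral_norm_eq_lintegral_enorm hG]
  refine setLIntegral_mono' measurableSet_Ioc fun ζ hζ => ?_
  rw [← ofReal_norm, div_eq_inv_mul]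
  refine ENNReal.ofReal_le_ofReal (le_trans ?_ (le_abs_self _))
  exact mul_le_mul_of_nonneg_left (hu ζ hζ t ht) (inv_nonneg.2 hζ.1.le)

lemma exists_lintegral_le_of_index_re_pos [NormedSpace ℂ E] {T : Type*} {s : Set T}
    {K : Finset (ℂ × ℕ)} {u : ℝ → T → E} {w : ℂ × ℕ → T → E} {δ C : ℝ} (hδ : 0 < δ)
    (hw : ∀ a ∈ K, Bornology.IsBounded (w a '' s))
    (hbound : ∀ ζ ∈ Ioc (0 : ℝ) 1, ∀ t ∈ s,
      ‖u ζ t - ∑ a ∈ K, logMonomial a ζ • w a t‖ ≤ C * ζ ^ δ)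
    (hpos : ∀ a ∈ K, (∃ t ∈ s, w a t ≠ 0) → 0 < a.1.re) :
    ∃ C' : ℝ, ∀ t ∈ s,
      ∫⁻ ζ in Ioc (0 : ℝ) 1, ENNReal.ofReal (‖u ζ t‖ / ζ) ≤ ENNReal.ofReal C' := by
  simp only [isBounded_iff_forall_norm_le, forall_mem_image] at hw
  choose! B hB using hw
  refine exists_lintegral_le_of_norm_le
    (G := fun ζ => (∑ a ∈ K with 0 < a.1.re, ‖logMonomial a ζ‖ * B a) + C * ζ ^ δ) ?_ ?_
  · simp only [mul_add, Finset.mul_sum, ← mul_assoc _ ‖_‖ _]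
    refine Integrable.add (integrable_finsetSum _ fun a ha => ?_)
      (integrableOn_inv_mul_const_mul_rpow hδ C)
    exact (integrableOn_inv_mul_norm_logMonomial (Finset.mem_filter.1 ha).2).mul_const (B a)
  · intro ζ hζ t ht
    have hsum : ∑ a ∈ K, logMonomial a ζ • w a t =
        ∑ a ∈ K with 0 < a.1.re, logMonomial a ζ • w a t :=
      (Finset.sum_filter_of_ne fun a ha hne =>
        hpos a ha ⟨t, ht, right_ne_zero_of_smul hne⟩).symm
    have hsum_le : ‖∑ a ∈ K, logMonomial a ζ • w a t‖ ≤
        ∑ a ∈ K with 0 < a.1.re, ‖logMonomial a ζ‖ * B a := by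
      rw [hsum]
      refine norm_sum_le_of_le _ fun a ha => ?_
      rw [norm_smul]
      gcongr
      exact hB a (Finset.mem_filter.1 ha).1 ht
    exact (norm_le_norm_add_norm_sub' _ _).trans (add_le_add hsum_le (hbound ζ hζ t ht))

theorem sal_integrability_iff_positive_index_general [NormedSpace ℂ E] [CompleteSpace E]
    {ι T : Type*} (K : Finset (ℂ × ℕ)) (s : Set T) (u : ι → ℝ → T → E)
    (δ : ι → ℝ) (hδ : ∀ p, 0 < δ p) (C : ι → ℝ) (w : ℂ × ℕ → ι → T → E)
    (hw : ∀ a ∈ K, ∀ p, Bornology.IsBounded (w a p '' s))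
    (hbound : ∀ p, ∀ ζ ∈ Ioc (0 : ℝ) 1, ∀ t ∈ s,
      ‖u p ζ t - ∑ a ∈ K, logMonomial a ζ • w a p t‖ ≤ C p * ζ ^ δ p) :
    (∀ p, ∃ C' : ℝ, ∀ t ∈ s,
      ∫⁻ ζ in Ioc (0 : ℝ) 1, ENNReal.ofReal (‖u p ζ t‖ / ζ) ≤ ENNReal.ofReal C') ↔
    (∀ a ∈ K, (∃ p, ∃ t ∈ s, w a p t ≠ 0) → 0 < a.1.re) := by
  constructor
  · rintro hlint a ha ⟨p, t, ht, hwt⟩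
    obtain ⟨C', hC'⟩ := hlint p
    have hcont : ContinuousOn (fun ζ => ∑ a ∈ K, logMonomial a ζ • w a p t) (Ioc 0 1) :=
      continuousOn_finsetSum K fun a _ =>
        ((continuousOn_logMonomial a).mono Ioc_subset_Ioi_self).smul continuousOn_const
    refine re_pos_of_integrableOn_sum_logMonomial (w := fun a => w a p t) ?_ ha hwt
    exact integrableOn_inv_smul_of_norm_sub_le ((hC' t ht).trans_lt ENNReal.ofReal_lt_top).ne hcont
      (integrableOn_inv_mul_const_mul_rpow (hδ p) (C p)) fun ζ hζ => hbound p ζ hζ t ht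
  · exact fun hpos p => exists_lintegral_le_of_index_re_pos (hδ p) (fun a ha => hw a ha p)
      (hbound p) fun a ha ⟨t, ht, hne⟩ => hpos a ha ⟨p, t, ht, hne⟩

/-- **Equivalence (C): the integrability conditions of the Singular Asymptotics Lemma
correspond to the condition `Re K₂ > 0` of the Push-Forward Theorem.**
`v(ζ,t)` has continuous `t`-derivatives of all orders and a polyhomogeneous bound at
`ζ = 0` with finite index set `K` and continuous coefficients `w_{α,k,p}`.  Then the
uniform bounds `∫_0^1 |∂_t^p v(ζ,t)| dζ/ζ ≤ C'_p` hold if and only if every index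
`(α,k) ∈ K` whose coefficient `w_{α,k,p}` is not identically zero for some `p`
satisfies `Re α > 0`. -/
theorem sal_integrability_iff_positive_index
    (K : Finset (ℂ × ℕ)) (v : ℝ → ℝ → ℂ)
    (hsmooth : ∀ ζ ∈ Ioc (0:ℝ) 1, ContDiffOn ℝ (⊤ : ℕ∞) (v ζ) (Icc 0 1))
    (hcont : ∀ p : ℕ, ContinuousOn
      (fun z : ℝ × ℝ => iteratedDerivWithin p (v z.1) (Icc 0 1) z.2)
      (Ioc (0:ℝ) 1 ×ˢ Icc (0:ℝ) 1))
    (δ : ℝ) (hδ : 0 < δ) (C : ℕ → ℝ) (w : ℂ × ℕ → ℕ → ℝ → ℂ)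
    (hw : ∀ ak ∈ K, ∀ p : ℕ, ContinuousOn (w ak p) (Icc 0 1))
    (hbound : ∀ p : ℕ, ∀ ζ ∈ Ioc (0:ℝ) 1, ∀ t ∈ Icc (0:ℝ) 1,
      ‖iteratedDerivWithin p (v ζ) (Icc 0 1) t -
          ∑ ak ∈ K, (ζ : ℂ) ^ (ak.1) * ((Real.log ζ : ℝ) : ℂ) ^ ak.2 * w ak p t‖
        ≤ C p * ζ ^ δ) :
    (∀ p : ℕ, ∃ C' : ℝ, ∀ t ∈ Icc (0:ℝ) 1,
      (∫⁻ ζ in Ioc (0:ℝ) 1,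
        ENNReal.ofReal (‖iteratedDerivWithin p (v ζ) (Icc 0 1) t‖ / ζ))
        ≤ ENNReal.ofReal C')
    ↔
    (∀ ak ∈ K, (∃ p : ℕ, ∃ t ∈ Icc (0:ℝ) 1, w ak p t ≠ 0) → 0 < ak.1.re) := by
  exact sal_integrability_iff_positive_index_general K (Icc 0 1)
    (fun p ζ t => iteratedDerivWithin p (v ζ) (Icc 0 1) t) (fun _ => δ) (fun _ => hδ) C w
    (fun a ha p => (isCompact_Icc.image_of_continuousOn (hw a ha p)).isBounded) hbound
end
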